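/- arXiv:2209.07847 — 5 statements merged into one kernel-verified Lean document; each statement's English description precedes it below -/
import Mathlib

section
/- Let G be a finite simple graph on [n] and 1 ≤ k ≤ ν(G). Let Γ_k(G) be the simplicial complex on V(G) whose faces are the subsets F ⊆ V(G) containing no vertex set V(M) of a k-matching M of G. Then the following are equivalent: (i) g_{I(G)}(k) = 0, i.e. depth(S/I(G)^{[k]}) = 2k − 1; (ii) the (2k−2)-nd reduced simplicial homology H̃_{2k−2}(Γ_k(G); K) is nonzero. -/
open MvPolynomial

section Preamble

variable (K : Type*) [Field K] {σ : Type*} [Fintype σ] [DecidableEq σ]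

/-- A (monic) monomial of the polynomial ring. -/
def IsMonomial (f : MvPolynomial σ K) : Prop :=
  ∃ d : σ →₀ ℕ, f = monomial d 1

/-- An ideal generated by monomials. -/
def IsMonomialIdeal (I : Ideal (MvPolynomial σ K)) : Prop :=
  ∃ A : Set (MvPolynomial σ K), (∀ u ∈ A, IsMonomial K u) ∧ I = Ideal.span A

/-- The unique minimal set of monomial generators `G(I)` of a monomial ideal:
the monomials of `I` that are minimal with respect to divisibility. -/
def minGens (I : Ideal (MvPolynomial σ K)) : Set (MvPolynomial σ K) :=
  {u | IsMonomial K u ∧ u ∈ I ∧ ∀ v, IsMonomial K v → v ∈ I → v ∣ u → v = u}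

/-- A squarefree monomial ideal. -/
def IsSqfreeMonomialIdeal (I : Ideal (MvPolynomial σ K)) : Prop :=
  IsMonomialIdeal K I ∧ ∀ u ∈ minGens K I, Squarefree u

/-- The `k`-th squarefree power `I^{[k]}`: the ideal generated by the squarefree
products of `k` minimal monomial generators of `I`. -/
noncomputable def sqPow (I : Ideal (MvPolynomial σ K)) (k : ℕ) : Ideal (MvPolynomial σ K) :=
  Ideal.span {u | Squarefree u ∧ ∃ l : List (MvPolynomial σ K),
    l.length = k ∧ (∀ f ∈ l, f ∈ minGens K I) ∧ u = l.prod}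

/-- `ν(I)`: the maximum length of a regular sequence of monomials in `I`. -/
noncomputable def monNu (I : Ideal (MvPolynomial σ K)) : ℕ :=
  sSup {m | ∃ l : List (MvPolynomial σ K), l.length = m ∧
    (∀ f ∈ l, IsMonomial K f ∧ f ∈ I) ∧
    RingTheory.Sequence.IsRegular (MvPolynomial σ K) l}

/-- The minimal degree `d` of a minimal monomial generator of `I`
(so `d_k = minDeg (I^{[k]})`). -/
noncomputable def minDeg (I : Ideal (MvPolynomial σ K)) : ℕ :=
  sInf (totalDegree '' minGens K I)

/-- `depth(S/I)`: the maximum length of an `S/I`-regular sequence of elements of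
the graded maximal ideal `(x_1, …, x_n)`. -/
noncomputable def qdepth (I : Ideal (MvPolynomial σ K)) : ℕ :=
  sSup {m | ∃ l : List (MvPolynomial σ K), l.length = m ∧
    (∀ f ∈ l, f ∈ Ideal.span (Set.range (X : σ → MvPolynomial σ K))) ∧
    RingTheory.Sequence.IsRegular (MvPolynomial σ K ⧸ I) l}

/-- `I` has linear quotients with respect to the ordering `L` of its minimal
monomial generators: each successive colon ideal is generated by variables. -/
def HasLinearQuotientsOrder (I : Ideal (MvPolynomial σ K))
    (L : List (MvPolynomial σ K)) : Prop :=
  L.Nodup ∧ (∀ u, u ∈ L ↔ u ∈ minGens K I) ∧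
  ∀ i : Fin L.length, 0 < (i : ℕ) →
    ∃ A : Set σ,
      Submodule.colon (Ideal.span {u | u ∈ L.take (i : ℕ)}) (Ideal.span {L.get i})
        = Ideal.span (X '' A)

/-- A monomial ideal with linear quotients. -/
def HasLinearQuotients (I : Ideal (MvPolynomial σ K)) : Prop :=
  ∃ L, HasLinearQuotientsOrder K I L

/-- A polymatroidal ideal: a monomial ideal generated in a single degree whose
minimal generators satisfy the exchange property. -/
def IsPolymatroidal (I : Ideal (MvPolynomial σ K)) : Prop :=
  IsMonomialIdeal K I ∧
  (∃ d, ∀ u ∈ minGens K I, totalDegree u = d) ∧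
  ∀ u ∈ minGens K I, ∀ v ∈ minGens K I, ∀ k : σ,
    degreeOf k v < degreeOf k u →
    ∃ l : σ, degreeOf l u < degreeOf l v ∧
      ∃ w, u = X k * w ∧ X l * w ∈ minGens K I

/-- A matroidal ideal: a polymatroidal ideal all of whose minimal generators are
squarefree. -/
def IsMatroidal (I : Ideal (MvPolynomial σ K)) : Prop :=
  IsPolymatroidal K I ∧ ∀ u ∈ minGens K I, Squarefree u

/-- The squarefree part of a monomial ideal: the ideal generated by its squarefree
minimal generators. -/
noncomputable def sqfPart (I : Ideal (MvPolynomial σ K)) : Ideal (MvPolynomial σ K) :=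
  Ideal.span {u | u ∈ minGens K I ∧ Squarefree u}

/-- The squarefree Veronese ideal `𝔪^{[d]}`, generated by all squarefree
monomials of degree `d`. -/
noncomputable def veronese (d : ℕ) : Ideal (MvPolynomial σ K) :=
  Ideal.span {u | ∃ F : Finset σ, F.card = d ∧ u = ∏ i ∈ F, X i}

/-- A chordal graph: no induced cycle of length greater than 3. -/
def IsChordal {V : Type*} (G : SimpleGraph V) : Prop :=
  ∀ m : ℕ, 4 ≤ m → ¬ ∃ f : ZMod m → V, Function.Injective f ∧
    ∀ i j : ZMod m, G.Adj (f i) (f j) ↔ (i = j + 1 ∨ j = i + 1)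

/-- A matching of `G`: a finite set of pairwise vertex-disjoint edges of `G`. -/
def IsMatching (G : SimpleGraph σ) (M : Finset (Sym2 σ)) : Prop :=
  (↑M ⊆ G.edgeSet) ∧ (M : Set (Sym2 σ)).Pairwise fun e f => ∀ v, v ∈ e → v ∉ f

/-- A `k`-matching of `G`. -/
def IsKMatching (G : SimpleGraph σ) (M : Finset (Sym2 σ)) (k : ℕ) : Prop :=
  IsMatching G M ∧ M.card = k

/-- The vertex set `V(M)` of a matching. -/
def mVerts (M : Finset (Sym2 σ)) : Finset σ :=
  Finset.univ.filter fun v => ∃ e ∈ M, v ∈ e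

/-- The squarefree monomial `∏_{v ∈ V(M)} x_v` attached to a matching. -/
noncomputable def matchMon (M : Finset (Sym2 σ)) : MvPolynomial σ K :=
  ∏ v ∈ mVerts M, X v

/-- The edge ideal `I(G)` of a finite simple graph `G`. -/
noncomputable def edgeIdeal (G : SimpleGraph σ) : Ideal (MvPolynomial σ K) :=
  Ideal.span {u | ∃ i j, G.Adj i j ∧ u = X i * X j}

/-- The `k`-th squarefree power `I(G)^{[k]}` of the edge ideal, generated by the
monomials `∏_{v ∈ V(M)} x_v` of the `k`-matchings `M` of `G`. -/
noncomputable def matchPow (G : SimpleGraph σ) (k : ℕ) : Ideal (MvPolynomial σ K) :=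
  Ideal.span {u | ∃ M : Finset (Sym2 σ), IsKMatching G M k ∧ u = matchMon K M}

/-- The matching number `ν(G)`. -/
noncomputable def matchNum (G : SimpleGraph σ) : ℕ :=
  sSup {k | ∃ M : Finset (Sym2 σ), IsKMatching G M k}

end Preamble

/-- The simplicial boundary operator on the free `K`-module with basis all finite
subsets of the (linearly ordered) vertex set; the empty set plays the role of the
`(-1)`-simplex, so that kernels compute *reduced* homology. -/
noncomputable def bnd (K : Type*) [Field K] {σ : Type*} [Fintype σ] [DecidableEq σ]
    [LinearOrder σ] : (Finset σ →₀ K) →ₗ[K] (Finset σ →₀ K) :=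
  Finsupp.lsum K fun s => LinearMap.toSpanSingleton K _
    (∑ v ∈ s, ((-1 : K) ^ ((s.filter (· < v)).card)) • Finsupp.single (s.erase v) (1 : K))

/-- Nonvanishing of the reduced simplicial homology `H̃_j(Δ; K)` of a simplicial
complex `Δ`: there is a `j`-cycle supported on faces of `Δ` (of cardinality `j+1`)
which is not the boundary of a `(j+1)`-chain supported on faces of `Δ`. -/
def homNonzero (K : Type*) [Field K] {σ : Type*} [Fintype σ] [DecidableEq σ]
    [LinearOrder σ] (Δ : Set (Finset σ)) (j : ℕ) : Prop :=
  ∃ c : Finset σ →₀ K, (∀ s ∈ c.support, s ∈ Δ ∧ s.card = j + 1) ∧ bnd K c = 0 ∧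
    ¬ ∃ b : Finset σ →₀ K, (∀ s ∈ b.support, s ∈ Δ ∧ s.card = j + 2) ∧ bnd K b = c

/-- The simplicial complex `Γ_k(G)`, whose faces are the vertex subsets containing
the vertex set of no `k`-matching of `G`; its Stanley–Reisner ideal is `I(G)^{[k]}`. -/
def matchingComplex {σ : Type*} [Fintype σ] [DecidableEq σ]
    (G : SimpleGraph σ) (k : ℕ) : Set (Finset σ) :=
  {F | ¬ ∃ M : Finset (Sym2 σ), IsKMatching G M k ∧ mVerts M ⊆ F}

section Koszul

open scoped Pointwise

universe u

variable {n : ℕ} {R : Type*} [CommRing R] {M : Type*} [AddCommGroup M] [Module R M]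

/-- sign -/
def ksg (R : Type*) [CommRing R] {n : ℕ} (s : Finset (Fin n)) (v : Fin n) : R :=
  (-1 : R) ^ ((s.filter (· < v)).card)

/-- Koszul cochain differential -/
def kd (x : Fin n → R) (f : Finset (Fin n) → M) (s : Finset (Fin n)) : M :=
  ∑ v ∈ s, (ksg R s v * x v) • f (s.erase v)

/-- contracting homotopy -/
def kh (R : Type*) [CommRing R] {n : ℕ} {M : Type*} [AddCommGroup M] [Module R M]
    (v : Fin n) (f : Finset (Fin n) → M) (s : Finset (Fin n)) : M :=
  if v ∈ s then 0 else ksg R s v • f (insert v s)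

lemma ksg_mul_self (s : Finset (Fin n)) (v : Fin n) : ksg R s v * ksg R s v = 1 := by
  unfold ksg
  rw [← mul_pow]; simp

lemma ksg_erase_self (s : Finset (Fin n)) (v : Fin n) : ksg R (s.erase v) v = ksg R s v := by
  unfold ksg
  congr 2
  ext u
  simp only [Finset.mem_filter, Finset.mem_erase]
  constructor
  · rintro ⟨⟨_, h⟩, h2⟩; exact ⟨h, h2⟩
  · rintro ⟨h, h2⟩; exact ⟨⟨h2.ne, h⟩, h2⟩

lemma ksg_insert_self (s : Finset (Fin n)) (v : Fin n) : ksg R (insert v s) v = ksg R s v := by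
  rw [← ksg_erase_self, Finset.erase_insert_eq_erase, ksg_erase_self]

lemma ksg_erase (s : Finset (Fin n)) (v w : Fin n) (hv : v ∈ s) :
    ksg R s w = ksg R (s.erase v) w * (if v < w then -1 else 1) := by
  unfold ksg
  split_ifs with h
  · rw [← pow_succ]
    congr 1
    rw [Finset.filter_erase, Finset.card_erase_add_one]
    simp [hv, h]
  · rw [Finset.filter_erase, Finset.erase_eq_of_notMem, mul_one]
    simp [h]

lemma ksg_swap (s : Finset (Fin n)) (v w : Fin n) (hv : v ∈ s) (hw : w ∈ s) (hvw : v ≠ w) :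
    ksg R s v * ksg R (s.erase v) w = - (ksg R s w * ksg R (s.erase w) v) := by
  rw [ksg_erase s v w hv, ksg_erase s w v hw]
  rcases lt_or_gt_of_ne hvw with h | h
  · simp [h, h.not_gt]; ring
  · simp [h, h.not_gt]; ring

lemma kd_kd (x : Fin n → R) (f : Finset (Fin n) → M) : kd x (kd x f) = 0 := by
  funext s
  have : kd x (kd x f) s = ∑ p ∈ s.offDiag,
      ((ksg R s p.1 * x p.1) * (ksg R (s.erase p.1) p.2 * x p.2)) •
        f ((s.erase p.1).erase p.2) := by
    unfold kd
    simp only [Finset.smul_sum, smul_smul]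
    rw [← Finset.sum_finset_product' s.offDiag s (fun v => s.erase v)]
    intro p
    simp only [Finset.mem_offDiag, Finset.mem_erase, ne_eq]
    constructor
    · rintro ⟨h1, h2, h3⟩; exact ⟨h1, fun h => h3 h.symm, h2⟩
    · rintro ⟨h1, h2, h3⟩; exact ⟨h1, h3, fun h => h2 h.symm⟩
  rw [this]
  refine Finset.sum_involution (fun p _ => (p.2, p.1)) ?_ ?_ ?_ ?_
  · rintro ⟨v, w⟩ h
    simp only [Finset.mem_offDiag] at h
    obtain ⟨hv, hw, hvw⟩ := h
    simp only
    rw [Finset.erase_right_comm (a := w), ← add_smul]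
    have := ksg_swap (R := R) s v w hv hw hvw
    have h2 : ksg R s v * x v * (ksg R (s.erase v) w * x w)
      + ksg R s w * x w * (ksg R (s.erase w) v * x v) = 0 := by
      linear_combination (x v * x w) * this
    rw [h2, zero_smul]
  · rintro ⟨v, w⟩ h _ h2
    simp only [Finset.mem_offDiag] at h
    simp only [Prod.mk.injEq] at h2
    exact h.2.2 h2.2
  · rintro ⟨v, w⟩ h
    simp only [Finset.mem_offDiag] at h ⊢
    exact ⟨h.2.1, h.1, h.2.2.symm⟩
  · rintro ⟨v, w⟩ h; rfl

lemma kd_kh (x : Fin n → R) (f : Finset (Fin n) → M) (v : Fin n) (s : Finset (Fin n)) :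
    kd x (kh R v f) s + kh R v (kd x f) s = x v • f s := by
  by_cases hv : v ∈ s
  · have h1 : kh R v (kd x f) s = 0 := by simp [kh, hv]
    rw [h1, add_zero]
    unfold kd
    rw [Finset.sum_eq_single_of_mem v hv]
    · simp only [kh, Finset.mem_erase, ne_eq, not_true_eq_false, false_and, if_false,
        Finset.insert_erase hv, smul_smul, ksg_erase_self]
      congr 1
      linear_combination x v * ksg_mul_self (R := R) s v
    · intro w hw hwv
      simp [kh, hv, Ne.symm hwv]
  · have h1 : kh R v (kd x f) s = x v • f s +
      ∑ w ∈ s, (ksg R s v * (ksg R (insert v s) w * x w)) • f ((insert v s).erase w) := by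
      simp only [kh, hv, if_false, kd]
      rw [Finset.sum_insert hv, smul_add, Finset.smul_sum]
      simp only [smul_smul]
      rw [Finset.erase_insert hv, ksg_insert_self, ← mul_assoc, ksg_mul_self, one_mul]
    rw [h1, add_left_comm, add_eq_left]
    unfold kd
    rw [← Finset.sum_add_distrib]
    refine Finset.sum_eq_zero fun w hw => ?_
    have hwv : w ≠ v := by rintro rfl; exact hv hw
    have h2 : (insert v s).erase w = insert v (s.erase w) :=
      Finset.erase_insert_of_ne hwv.symm
    simp only [kh, Finset.mem_erase, hv, and_false, if_false, smul_smul, h2]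
    rw [← add_smul]
    have := ksg_swap (R := R) (insert v s) v w (by simp) (by simp [hw]) hwv.symm
    rw [Finset.erase_insert hv, ksg_insert_self, h2, ksg_insert_self] at this
    have h3 : ksg R (insert v s) w = ksg R s w * (if v < w then -1 else 1) := by
      rw [ksg_erase (insert v s) v w (by simp), Finset.erase_insert hv]
    have h4 : ksg R s v = ksg R (s.erase w) v * (if w < v then -1 else 1) :=
      ksg_erase s w v hw
    have h5 : ksg R s w * x w * ksg R (s.erase w) v
       + ksg R s v * (ksg R (insert v s) w * x w) = 0 := by
      rw [h3, h4]
      rcases lt_or_gt_of_ne hwv with h | h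
      · simp [h, h.not_gt]; ring
      · simp [h, h.not_gt]; ring
    rw [h5, zero_smul]

lemma kd_add (x : Fin n → R) (f g : Finset (Fin n) → M) : kd x (f + g) = kd x f + kd x g := by
  funext s; simp [kd, Finset.sum_add_distrib]

lemma kd_smul (x : Fin n → R) (r : R) (f : Finset (Fin n) → M) : kd x (r • f) = r • kd x f := by
  funext s; simp only [kd, Pi.smul_apply, Finset.smul_sum]
  refine Finset.sum_congr rfl fun v _ => ?_
  rw [smul_comm]

lemma kd_congr (x : Fin n → R) (f g : Finset (Fin n) → M) (i : ℕ)
    (h : ∀ s, s.card = i → f s = g s) (s : Finset (Fin n)) (hs : s.card = i + 1) :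
    kd x f s = kd x g s := by
  unfold kd
  refine Finset.sum_congr rfl fun v hv => ?_
  rw [h]; rw [Finset.card_erase_of_mem hv, hs]; rfl

lemma kd_map {N : Type*} [AddCommGroup N] [Module R N] (φ : M →ₗ[R] N)
    (x : Fin n → R) (f : Finset (Fin n) → M) (s : Finset (Fin n)) :
    kd x (fun t => φ (f t)) s = φ (kd x f s) := by
  simp [kd, map_sum]

/-- vanishing of the `i`-th Koszul cohomology -/
def Hvan (x : Fin n → R) (M : Type*) [AddCommGroup M] [Module R M] (i : ℕ) : Prop :=
  ∀ f : Finset (Fin n) → M, (∀ s, s.card = i + 1 → kd x f s = 0) →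
    ∃ g : Finset (Fin n) → M, ∀ s, s.card = i → f s = kd x g s

lemma kill (x : Fin n → R) (y : R) (hy : y ∈ Ideal.span (Set.range x)) (i : ℕ)
    (f : Finset (Fin n) → M) (hf : ∀ s, s.card = i + 1 → kd x f s = 0) :
    ∃ g : Finset (Fin n) → M, ∀ s, s.card = i → y • f s = kd x g s := by
  induction hy using Submodule.span_induction with
  | mem y hy =>
    obtain ⟨v, rfl⟩ := hy
    refine ⟨kh R v f, fun s hs => ?_⟩
    rw [← kd_kh, add_eq_left]
    unfold kh
    split_ifs with h
    · rfl
    · rw [hf, smul_zero]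
      rw [Finset.card_insert_of_notMem h, hs]
  | zero => exact ⟨0, fun s _ => by simp [kd]⟩
  | add a b _ _ ha hb =>
    obtain ⟨g, hg⟩ := ha
    obtain ⟨g', hg'⟩ := hb
    refine ⟨g + g', fun s hs => ?_⟩
    rw [kd_add, add_smul, hg s hs, hg' s hs]; rfl
  | smul r a _ ha =>
    obtain ⟨g, hg⟩ := ha
    refine ⟨r • g, fun s hs => ?_⟩
    rw [kd_smul, smul_assoc, hg s hs]; rfl

lemma mem_smul_top_iff (y : R) (m : M) :
    (Submodule.Quotient.mk m : QuotSMulTop y M) = 0 ↔ ∃ m', m = y • m' := by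
  rw [Submodule.Quotient.mk_eq_zero, Submodule.mem_smul_pointwise_iff_exists]
  constructor
  · rintro ⟨b, _, h⟩; exact ⟨b, h.symm⟩
  · rintro ⟨b, h⟩; exact ⟨b, trivial, h.symm⟩

lemma van_up (x : Fin n → R) (y : R) (hy : y ∈ Ideal.span (Set.range x))
    (hreg : IsSMulRegular M y) (i : ℕ) (h : Hvan x (QuotSMulTop y M) i) :
    Hvan x M (i + 1) := by
  intro f hf
  obtain ⟨g, hg⟩ := kill x y hy (i + 1) f hf
  let q := Submodule.mkQ (y • (⊤ : Submodule R M))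
  obtain ⟨g', hg'⟩ := h (fun s => q (g s)) (fun s hs => by
    rw [kd_map, ← hg s hs]
    exact (mem_smul_top_iff y _).2 ⟨_, rfl⟩)
  choose g1 hg1 using fun s => Submodule.mkQ_surjective (y • (⊤ : Submodule R M)) (g' s)
  have key : ∀ s, ∃ m, s.card = i → g s = kd x g1 s + y • m := by
    intro s
    by_cases hs : s.card = i
    · have h1 : q (g s - kd x g1 s) = 0 := by
        rw [map_sub, hg' s hs, ← kd_map]
        simp only [q, hg1, sub_self]
      obtain ⟨m, hm⟩ := (mem_smul_top_iff y _).1 h1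
      exact ⟨m, fun _ => by rw [← hm]; abel⟩
    · exact ⟨0, fun h => absurd h hs⟩
  choose g2 hg2 using key
  refine ⟨g2, fun s hs => hreg ?_⟩
  change y • f s = y • kd x g2 s
  rw [hg s hs, kd_congr x g (kd x g1 + y • g2) i (fun s hs => hg2 s hs) s hs, kd_add, kd_kd,
    kd_smul, zero_add]
  rfl

lemma van_zero (x : Fin n → R) (y : R) (hy : y ∈ Ideal.span (Set.range x))
    (hreg : IsSMulRegular M y) : Hvan x M 0 := by
  intro f hf
  obtain ⟨g, hg⟩ := kill x y hy 0 f hf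
  refine ⟨0, fun s hs => hreg ?_⟩
  change y • f s = y • kd x 0 s
  rw [hg s hs]
  rw [Finset.card_eq_zero] at hs
  simp [kd, hs]

lemma van_down (x : Fin n → R) (y : R) 
    (hreg : IsSMulRegular M y) (i : ℕ) (h : Hvan x M i) (h' : Hvan x M (i + 1)) :
    Hvan x (QuotSMulTop y M) i := by
  intro f hf
  let q := Submodule.mkQ (y • (⊤ : Submodule R M))
  choose f1 hf1 using fun s => Submodule.mkQ_surjective (y • (⊤ : Submodule R M)) (f s)
  have key : ∀ s, ∃ m, s.card = i + 1 → kd x f1 s = y • m := by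
    intro s
    by_cases hs : s.card = i + 1
    · have h1 : q (kd x f1 s) = 0 := by
        rw [← kd_map]
        simp only [q, hf1]
        exact hf s hs
      obtain ⟨m, hm⟩ := (mem_smul_top_iff y _).1 h1
      exact ⟨m, fun _ => hm⟩
    · exact ⟨0, fun h => absurd h hs⟩
  choose g hg using key
  obtain ⟨g1, hg1⟩ := h' g (fun s hs => by
    apply hreg
    change y • kd x g s = y • 0
    have := kd_congr x (kd x f1) (y • g) (i + 1) (fun s hs => hg s hs) s hs
    rw [kd_kd, kd_smul] at this
    rw [smul_zero]; exact this.symm)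
  obtain ⟨g2, hg2⟩ := h (f1 + (-y) • g1) (fun s hs => by
    rw [kd_add, kd_smul, Pi.add_apply, Pi.smul_apply, hg s hs, hg1 s hs, neg_smul,
      add_neg_cancel])
  refine ⟨fun s => q (g2 s), fun s hs => ?_⟩
  rw [kd_map, ← hg2 s hs, ← hf1]
  simp only [Pi.add_apply, Pi.smul_apply, map_add]
  have : q (-y • g1 s) = 0 := (mem_smul_top_iff y _).2 ⟨- g1 s, by simp⟩
  rw [this, add_zero]

lemma exists_reg [IsNoetherianRing R] [Module.Finite R M] (x : Fin n → R) (h : Hvan x M 0) :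
    ∃ y ∈ Ideal.span (Set.range x), IsSMulRegular M y := by
  by_contra! hc
  have h1 : ((Ideal.span (Set.range x) : Ideal R) : Set R) ⊆
      ⋃ p ∈ associatedPrimes R M, (p : Set R) := by
    rw [biUnion_associatedPrimes_eq_compl_regular]
    exact fun y hy => hc y hy
  rw [Ideal.subset_union_prime_finite (f := fun p => p) (associatedPrimes.finite R M) ⊤ ⊤
    (fun p hp _ _ => hp.1)] at h1
  obtain ⟨P, hP, hle⟩ := h1
  obtain ⟨hprime, z, hz⟩ := Submodule.isAssociatedPrime_iff.1 hP
  have hxz : ∀ v, x v • z = 0 := by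
    intro v
    have : x v ∈ P := hle (Ideal.subset_span ⟨v, rfl⟩)
    rw [hz, Submodule.mem_colon_singleton] at this
    simpa using this
  obtain ⟨g, hg⟩ := h (fun _ => z) (fun s _ => by
    unfold kd
    refine Finset.sum_eq_zero fun v _ => ?_
    rw [mul_smul, hxz, smul_zero])
  have hz0 : z = 0 := by simpa [kd] using hg ∅ rfl
  apply hprime.ne_top
  rw [hz, Ideal.eq_top_iff_one, Submodule.mem_colon_singleton, hz0]
  simp

lemma weak_iff [IsNoetherianRing R] (x : Fin n → R) (r : ℕ) :
    ∀ (M : Type u) [AddCommGroup M] [Module R M] [Module.Finite R M],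
    (∃ l : List R, l.length = r ∧ (∀ f ∈ l, f ∈ Ideal.span (Set.range x)) ∧
      RingTheory.Sequence.IsWeaklyRegular M l) ↔ ∀ i < r, Hvan x M i := by
  induction r with
  | zero =>
    intro M _ _ _
    simp only [List.length_eq_zero_iff, not_lt_zero, IsEmpty.forall_iff, implies_true, iff_true]
    refine ⟨[], rfl, by simp, by simp⟩
  | succ r ih =>
    intro M _ _ _
    constructor
    · rintro ⟨l, hl, hm, hreg⟩
      obtain _ | ⟨y, l⟩ := l
      · simp at hl
      rw [RingTheory.Sequence.isWeaklyRegular_cons_iff] at hreg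
      have := (ih (QuotSMulTop y M)).1 ⟨l, by simpa using hl,
        fun f hf => hm f (by simp [hf]), hreg.2⟩
      intro i hi
      obtain _ | i := i
      · exact van_zero x y (hm y (by simp)) hreg.1
      · exact van_up x y (hm y (by simp)) hreg.1 i (this i (by omega))
    · intro h
      obtain ⟨y, hy, hreg⟩ := exists_reg x (h 0 (by omega))
      obtain ⟨l, hl, hm, hl2⟩ := (ih (QuotSMulTop y M)).2
        (fun i hi => van_down x y hreg i (h i (by omega)) (h (i + 1) (by omega)))
      refine ⟨y :: l, by simp [hl], ?_, ?_⟩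
      · simpa [hy] using hm
      · rw [RingTheory.Sequence.isWeaklyRegular_cons_iff]
        exact ⟨hreg, hl2⟩

end Koszul
section Depth

variable {n : ℕ} {K : Type*} [Field K]

lemma top_ne (I : Ideal (MvPolynomial (Fin n) K))
    (hI : I ≤ Ideal.span (Set.range (X : Fin n → MvPolynomial (Fin n) K))) :
    Ideal.span (Set.range (X : Fin n → MvPolynomial (Fin n) K)) •
      (⊤ : Submodule (MvPolynomial (Fin n) K) (MvPolynomial (Fin n) K ⧸ I)) ≤
     (Submodule.map (Submodule.mkQ I)
      (Ideal.span (Set.range (X : Fin n → MvPolynomial (Fin n) K)))) ∧ 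
    (Submodule.mkQ I 1 ∉ (Submodule.map (Submodule.mkQ I)
      (Ideal.span (Set.range (X : Fin n → MvPolynomial (Fin n) K))))) := by
  constructor
  · rw [Submodule.smul_le]
    intro r hr z _
    obtain ⟨z, rfl⟩ := Submodule.mkQ_surjective I z
    refine ⟨r * z, Ideal.mul_mem_right _ _ hr, ?_⟩
    rw [← smul_eq_mul, map_smul]
  · rintro ⟨y, hy, h⟩
    have h1 : y - 1 ∈ I := by
      rw [← sub_eq_zero, ← map_sub] at h
      exact (Submodule.Quotient.mk_eq_zero I).1 h
    have h2 : (1 : MvPolynomial (Fin n) K) ∈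
        Ideal.span (Set.range (X : Fin n → MvPolynomial (Fin n) K)) := by
      have := Ideal.sub_mem _ hy (hI h1)
      simpa using this
    have h3 : Ideal.span (Set.range (X : Fin n → MvPolynomial (Fin n) K)) ≤
        RingHom.ker (constantCoeff (R := K) (σ := Fin n)) := by
      rw [Ideal.span_le]
      rintro _ ⟨v, rfl⟩
      simp [RingHom.mem_ker]
    have := h3 h2
    simp [RingHom.mem_ker] at this

lemma reg_iff (I : Ideal (MvPolynomial (Fin n) K))
    (hI : I ≤ Ideal.span (Set.range (X : Fin n → MvPolynomial (Fin n) K))) (r : ℕ) :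
    (∃ l : List (MvPolynomial (Fin n) K), l.length = r ∧
    (∀ f ∈ l, f ∈ Ideal.span (Set.range (X : Fin n → MvPolynomial (Fin n) K))) ∧
    RingTheory.Sequence.IsRegular (MvPolynomial (Fin n) K ⧸ I) l) ↔
    ∀ i < r, Hvan (X : Fin n → MvPolynomial (Fin n) K) (MvPolynomial (Fin n) K ⧸ I) i := by
  rw [← weak_iff]
  refine exists_congr fun l => and_congr_right fun _ => and_congr_right fun hm => ?_
  refine ⟨fun h => h.1, fun h => ⟨h, fun htop => ?_⟩⟩
  obtain ⟨h1, h2⟩ := top_ne I hI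
  apply h2
  apply h1
  have h3 : Ideal.ofList l ≤ Ideal.span (Set.range (X : Fin n → MvPolynomial (Fin n) K)) := by
    unfold Ideal.ofList
    rw [Ideal.span_le]
    exact fun f hf => hm f hf
  apply Submodule.smul_mono_left h3
  rw [← htop]
  trivial

lemma not_van_top (I : Ideal (MvPolynomial (Fin n) K))
    (hI : I ≤ Ideal.span (Set.range (X : Fin n → MvPolynomial (Fin n) K))) :
    ¬ Hvan (X : Fin n → MvPolynomial (Fin n) K) (MvPolynomial (Fin n) K ⧸ I) n := by
  intro h
  obtain ⟨g, hg⟩ := h (fun _ => Submodule.mkQ I 1) (fun s hs => by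
    have := Finset.card_le_univ s
    rw [hs, Fintype.card_fin] at this
    omega)
  obtain ⟨h1, h2⟩ := top_ne I hI
  apply h2
  apply h1
  rw [hg Finset.univ (by simp)]
  refine Submodule.sum_mem _ fun v _ => ?_
  refine Submodule.smul_mem_smul ?_ trivial
  exact Ideal.mul_mem_left _ _ (Ideal.subset_span ⟨v, rfl⟩)

lemma qdepth_iff (I : Ideal (MvPolynomial (Fin n) K))
    (hI : I ≤ Ideal.span (Set.range (X : Fin n → MvPolynomial (Fin n) K))) (r : ℕ)
    (hr : ∀ i < r, Hvan (X : Fin n → MvPolynomial (Fin n) K) (MvPolynomial (Fin n) K ⧸ I) i) :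
    qdepth K I = r ↔
      ¬ Hvan (X : Fin n → MvPolynomial (Fin n) K) (MvPolynomial (Fin n) K ⧸ I) r := by
  unfold qdepth
  simp only [reg_iff I hI]
  have hb : BddAbove {m | ∀ i < m,
      Hvan (X : Fin n → MvPolynomial (Fin n) K) (MvPolynomial (Fin n) K ⧸ I) i} := by
    refine ⟨n, fun m hm => ?_⟩
    by_contra! hc
    exact not_van_top I hI (hm n hc)
  constructor
  · intro h h2
    have : r + 1 ≤ sSup _ := le_csSup hb (a := r + 1) (by
      intro i hi
      rcases Nat.lt_succ_iff_lt_or_eq.1 hi with h | rfl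
      · exact hr i h
      · exact h2)
    omega
  · intro h
    apply le_antisymm
    · refine csSup_le ⟨r, hr⟩ fun m hm => ?_
      by_contra! hc
      exact h (hm r hc)
    · exact le_csSup hb hr

lemma hvan_quot {R : Type*} [CommRing R] (I : Ideal R) (x : Fin n → R) (i : ℕ) :
    Hvan x (R ⧸ I) i ↔ ∀ f : Finset (Fin n) → R,
      (∀ s, s.card = i + 1 → kd x f s ∈ I) → ∃ g : Finset (Fin n) → R,
        ∀ s, s.card = i → f s - kd x g s ∈ I := by
  constructor
  · intro h f hf
    obtain ⟨g, hg⟩ := h (fun s => Submodule.mkQ I (f s)) (fun s hs => by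
      rw [kd_map]; exact (Submodule.Quotient.mk_eq_zero I).2 (hf s hs))
    choose g1 hg1 using fun s => Submodule.mkQ_surjective I (g s)
    refine ⟨g1, fun s hs => ?_⟩
    rw [← Submodule.Quotient.mk_eq_zero I]
    change Submodule.mkQ I _ = 0
    rw [map_sub, hg s hs, ← kd_map]
    simp only [hg1, sub_self]
  · intro h f hf
    choose f1 hf1 using fun s => Submodule.mkQ_surjective I (f s)
    obtain ⟨g, hg⟩ := h f1 (fun s hs => by
      rw [← Submodule.Quotient.mk_eq_zero I]
      change Submodule.mkQ I _ = 0
      rw [← kd_map]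
      simp only [hf1]
      exact hf s hs)
    refine ⟨fun s => Submodule.mkQ I (g s), fun s hs => ?_⟩
    rw [kd_map, ← hf1, ← sub_eq_zero, ← map_sub]
    exact (Submodule.Quotient.mk_eq_zero I).2 (hg s hs)

end Depth

section Mono

variable {n : ℕ} {K : Type*} [Field K]

/-- indicator exponent -/
def ind (s : Finset (Fin n)) (v : Fin n) : ℤ := if v ∈ s then 1 else 0

/-- exponent `a + 1_s` -/
noncomputable def ex (a : Fin n → ℤ) (s : Finset (Fin n)) : Fin n →₀ ℕ :=
  Finsupp.equivFunOnFinite.symm (fun v => (a v + ind s v).toNat)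

open Classical in
/-- multigraded coefficient -/
noncomputable def cf (a : Fin n → ℤ) (f : Finset (Fin n) → MvPolynomial (Fin n) K)
    (s : Finset (Fin n)) : K :=
  if ∀ v, 0 ≤ a v + ind s v then coeff (ex a s) (f s) else 0

lemma ex_apply (a : Fin n → ℤ) (s : Finset (Fin n)) (v : Fin n) :
    ex a s v = (a v + ind s v).toNat := rfl

lemma ksg_C (s : Finset (Fin n)) (v : Fin n) :
    ksg (MvPolynomial (Fin n) K) s v = C (ksg K s v) := by
  simp [ksg]

lemma ind_erase (s : Finset (Fin n)) (v w : Fin n) (hv : v ∈ s) :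
    ind (s.erase v) w = ind s w - if w = v then 1 else 0 := by
  unfold ind
  by_cases h : w = v
  · subst h; simp [hv]
  · simp [h]

lemma cf_kd (a : Fin n → ℤ) (f : Finset (Fin n) → MvPolynomial (Fin n) K)
    (s : Finset (Fin n)) :
    cf a (kd (X : Fin n → MvPolynomial (Fin n) K) f) s = kd (fun _ => (1 : K)) (cf a f) s := by
  have hterm : ∀ v ∈ s, ((∀ w, 0 ≤ a w + ind s w) →
      coeff (ex a s) (X v * f (s.erase v)) = cf a f (s.erase v)) ∧
      ((¬ ∀ w, 0 ≤ a w + ind s w) → cf a f (s.erase v) = 0) := by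
    intro v hv
    constructor
    · intro hpos
      rw [coeff_X_mul']
      have hiv : ind s v = 1 := by simp [ind, hv]
      by_cases hav : 0 ≤ a v
      · have h1 : v ∈ (ex a s).support := by
          rw [Finsupp.mem_support_iff, ex_apply, hiv]; omega
        have h2 : ∀ w, 0 ≤ a w + ind (s.erase v) w := by
          intro w
          rw [ind_erase s v w hv]
          have := hpos w
          split_ifs with h
          · subst h; omega
          · omega
        rw [if_pos h1, cf, if_pos h2]
        congr 1
        ext w
        rw [Finsupp.tsub_apply, ex_apply, ex_apply, ind_erase s v w hv, Finsupp.single_apply]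
        by_cases h : w = v
        · subst h; simp; omega
        · simp [h, Ne.symm h]
      · have h1 : v ∉ (ex a s).support := by
          rw [Finsupp.mem_support_iff, ex_apply, hiv]; omega
        rw [if_neg h1, cf, if_neg]
        intro h
        have := h v
        rw [ind_erase s v v hv, hiv] at this
        simp at this; omega
    · intro hneg
      rw [cf, if_neg]
      intro h
      apply hneg
      intro w
      have := h w
      rw [ind_erase s v w hv] at this
      split_ifs at this <;> omega
  by_cases hpos : ∀ w, 0 ≤ a w + ind s w
  · rw [cf, if_pos hpos]
    unfold kd
    rw [coeff_sum]
    refine Finset.sum_congr rfl fun v hv => ?_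
    rw [smul_eq_mul, ksg_C, mul_assoc, coeff_C_mul, (hterm v hv).1 hpos, mul_one, smul_eq_mul]
  · rw [cf, if_neg hpos]
    unfold kd
    symm
    refine Finset.sum_eq_zero fun v hv => ?_
    rw [(hterm v hv).2 hpos, smul_zero]

lemma ex_sub (m : Fin n →₀ ℕ) (s : Finset (Fin n)) :
    ex (fun v => (m v : ℤ) - ind s v) s = m := by
  ext v; rw [ex_apply]; simp

lemma cf_sub (m : Fin n →₀ ℕ) (s : Finset (Fin n))
    (f : Finset (Fin n) → MvPolynomial (Fin n) K) :
    cf (fun v => (m v : ℤ) - ind s v) f s = coeff m (f s) := by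
  rw [cf, if_pos, ex_sub]
  intro v; simp

open Classical in
/-- chosen vertex -/
noncomputable def vv (v0 : Fin n) (a : Fin n → ℤ) : Fin n :=
  if h : ∃ v, 1 ≤ a v then h.choose else if h : ∃ v, 0 ≤ a v then h.choose else v0

lemma vv_spec (v0 : Fin n) (a : Fin n → ℤ) (h : ∃ v, 0 ≤ a v) :
    1 ≤ a (vv v0 a) ∨ (a (vv v0 a) = 0 ∧ ∀ u, a u ≤ 0) := by
  unfold vv
  split_ifs with h1
  · exact Or.inl h1.choose_spec
  · push Not at h1
    right
    have := h.choose_spec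
    have h2 := h1 h.choose
    exact ⟨by omega, fun u => by have := h1 u; omega⟩

lemma ind_insert (s : Finset (Fin n)) (v w : Fin n) (hv : v ∉ s) :
    ind (insert v s) w = ind s w + if w = v then 1 else 0 := by
  unfold ind
  by_cases h : w = v
  · subst h; simp [hv]
  · simp [h]

lemma g_fin (v0 : Fin n) (f : Finset (Fin n) → MvPolynomial (Fin n) K) (s : Finset (Fin n)) :
    (Function.support fun m : Fin n →₀ ℕ => kh K (vv v0 (fun v => (m v : ℤ) - ind s v))
      (cf (fun v => (m v : ℤ) - ind s v) f) s).Finite := by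
  refine Set.Finite.subset (s := ⋃ v : Fin n, (fun m : Fin n →₀ ℕ => m + Finsupp.single v 1) ⁻¹'
    ((f (insert v s)).support : Set (Fin n →₀ ℕ))) ?_ ?_
  · refine Set.finite_iUnion fun v => ?_
    refine Set.Finite.preimage ?_ (Finset.finite_toSet _)
    exact (add_left_injective _).injOn
  · intro m hm
    rw [Function.mem_support] at hm
    rw [Set.mem_iUnion]
    refine ⟨vv v0 (fun v => (m v : ℤ) - ind s v), ?_⟩
    generalize vv v0 (fun v => (m v : ℤ) - ind s v) = v at *
    rw [Set.mem_preimage, Finset.mem_coe, mem_support_iff]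
    intro h0
    apply hm
    unfold kh
    split_ifs with h
    · rfl
    · have : ex (fun v => (m v : ℤ) - ind s v) (insert v s) = m + Finsupp.single v 1 := by
        ext w
        rw [ex_apply, ind_insert s v w h, Finsupp.add_apply, Finsupp.single_apply]
        by_cases hw : w = v
        · subst hw; simp; omega
        · simp [hw, Ne.symm hw]
      rw [cf, this, h0]
      simp

/-- the primitive -/
noncomputable def gg (v0 : Fin n) (f : Finset (Fin n) → MvPolynomial (Fin n) K)
    (s : Finset (Fin n)) : MvPolynomial (Fin n) K :=
  ∑ m ∈ (g_fin v0 f s).toFinset, monomial m (kh K (vv v0 (fun v => (m v : ℤ) - ind s v))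
      (cf (fun v => (m v : ℤ) - ind s v) f) s)

lemma coeff_gg (v0 : Fin n) (f : Finset (Fin n) → MvPolynomial (Fin n) K)
    (s : Finset (Fin n)) (m : Fin n →₀ ℕ) :
    coeff m (gg v0 f s) = kh K (vv v0 (fun v => (m v : ℤ) - ind s v))
      (cf (fun v => (m v : ℤ) - ind s v) f) s := by
  classical
  unfold gg
  rw [coeff_sum]
  simp only [coeff_monomial]
  rw [Finset.sum_ite_eq']
  split_ifs with h
  · rfl
  · simpa [Set.Finite.mem_toFinset] using (Eq.symm (by simpa using h))

lemma cf_gg (v0 : Fin n) (f : Finset (Fin n) → MvPolynomial (Fin n) K)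
    (a : Fin n → ℤ) (ha : 0 ≤ a (vv v0 a)) (s : Finset (Fin n)) :
    cf a (gg v0 f) s = kh K (vv v0 a) (cf a f) s := by
  by_cases h : ∀ w, 0 ≤ a w + ind s w
  · have h1 : (fun v => ((ex a s) v : ℤ) - ind s v) = a := by
      funext v
      rw [ex_apply, Int.toNat_of_nonneg (h v)]; ring
    rw [cf, if_pos h, coeff_gg, h1]
  · rw [cf, if_neg h, kh]
    split_ifs with h2
    · rfl
    · rw [cf, if_neg, smul_zero]
      intro h3
      apply h
      intro w
      have := h3 w
      rw [ind_insert s _ w h2] at this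
      by_cases hw : w = vv v0 a
      · subst hw
        have : 0 ≤ ind s (vv v0 a) := by unfold ind; split_ifs <;> simp
        omega
      · rw [if_neg hw] at this; omega

variable {Δ : Set (Finset (Fin n))} {I : Ideal (MvPolynomial (Fin n) K)}

lemma cf_mem (hI : ∀ p, p ∈ I ↔ ∀ m ∈ p.support, m.support ∉ Δ)
    (a : Fin n → ℤ) (f : Finset (Fin n) → MvPolynomial (Fin n) K) (s : Finset (Fin n))
    (hf : f s ∈ I) (hs : (∀ w, 0 ≤ a w + ind s w) → (ex a s).support ∈ Δ) : cf a f s = 0 := by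
  unfold cf
  split_ifs with h
  · by_contra hc
    exact (hI _).1 hf _ (mem_support_iff.2 hc) (hs h)
  · rfl

/-- scalar condition -/
def StarCond (K : Type*) [Field K] {n : ℕ} (Δ : Set (Finset (Fin n))) (d : ℕ) : Prop :=
  ∀ φ : Finset (Fin n) → K,
    (∀ s ∈ Δ, s.card = d → kd (fun _ => (1 : K)) φ s = 0) →
      ∀ s, s.card = d → kd (fun _ => (1 : K)) φ s = 0

lemma van_of_star (hI : ∀ p, p ∈ I ↔ ∀ m ∈ p.support, m.support ∉ Δ) (d : ℕ)
    (hΔ : ∀ s : Finset (Fin n), s.card < d → s ∈ Δ) (hd : d ≤ n) (i : ℕ) (hi : i < d)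
    (hstar : StarCond K Δ (i + 1)) :
    Hvan (X : Fin n → MvPolynomial (Fin n) K) (MvPolynomial (Fin n) K ⧸ I) i := by
  rw [hvan_quot]
  intro f hf
  let v0 : Fin n := ⟨0, by omega⟩
  refine ⟨gg v0 f, fun s hs => ?_⟩
  rw [hI]
  intro m hm hmΔ
  rw [mem_support_iff] at hm
  apply hm
  rw [coeff_sub, ← cf_sub m s, ← cf_sub m s, cf_kd]
  generalize hadef : (fun v => (m v : ℤ) - ind s v) = a
  have hma : ∀ v, a v = (m v : ℤ) - ind s v := fun v => by rw [← hadef]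
  have hex : ∃ v, v ∉ s := by
    by_contra! hc
    have : s = Finset.univ := by ext v; simp [hc v]
    rw [this, Finset.card_univ, Fintype.card_fin] at hs
    omega
  have hex' : ∃ v, 0 ≤ a v := by
    obtain ⟨v, hv⟩ := hex
    refine ⟨v, ?_⟩
    rw [hma]; simp [ind, hv]
  have hspec := vv_spec v0 a hex'
  have h0 : 0 ≤ a (vv v0 a) := by omega
  rw [show cf a (gg v0 f) = kh K (vv v0 a) (cf a f) from funext fun t => cf_gg v0 f a h0 t]
  have hk := kd_kh (fun _ => (1 : K)) (cf a f) (vv v0 a) s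
  rw [one_smul] at hk
  rw [← hk, add_sub_cancel_left]
  generalize vv v0 a = v at *
  unfold kh
  split_ifs with hvs
  · rfl
  have hcard : (insert v s).card = i + 1 := by rw [Finset.card_insert_of_notMem hvs, hs]
  suffices h : kd (fun _ => (1 : K)) (cf a f) (insert v s) = 0 by rw [h, smul_zero]
  rcases hspec with h1 | ⟨h1, h2⟩
  · rw [← cf_kd]
    refine cf_mem hI a _ _ (hf _ hcard) fun _ => ?_
    have : (ex a (insert v s)).support = m.support := by
      ext w
      rw [Finsupp.mem_support_iff, Finsupp.mem_support_iff, ex_apply, ind_insert s v w hvs, hma]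
      by_cases hw : w = v
      · subst hw
        rw [hma] at h1
        have : ind s w = 0 := by simp [ind, hvs]
        simp; omega
      · simp [hw]
    rw [this]; exact hmΔ
  · by_cases hu : ∃ u, a u < 0
    · obtain ⟨u, hu⟩ := hu
      rw [← cf_kd]
      refine cf_mem hI a _ _ (hf _ hcard) fun hpos => hΔ _ ?_
      have hsub : (ex a (insert v s)).support ⊆ (insert v s).erase u := by
        intro w hw
        rw [Finsupp.mem_support_iff, ex_apply] at hw
        rw [Finset.mem_erase]
        have h3 := h2 w
        unfold ind at hw
        constructor
        · rintro rfl
          split_ifs at hw <;> omega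
        · by_contra hc
          rw [if_neg hc] at hw
          omega
      have hmem : u ∈ insert v s := by
        by_contra hc
        have := hpos u
        unfold ind at this
        rw [if_neg hc] at this
        omega
      have := Finset.card_le_card hsub
      rw [Finset.card_erase_of_mem hmem, hcard] at this
      omega
    · push Not at hu
      have ha0 : ∀ u, a u = 0 := fun u => le_antisymm (h2 u) (hu u)
      refine hstar _ (fun t ht htc => ?_) _ hcard
      rw [← cf_kd]
      refine cf_mem hI a _ _ (hf _ htc) fun hpos => ?_
      have : (ex a t).support = t := by
        ext w
        rw [Finsupp.mem_support_iff, ex_apply, ha0]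
        unfold ind
        split_ifs with h <;> simp [h]
      rw [this]; exact ht

lemma star_of_van (hI : ∀ p, p ∈ I ↔ ∀ m ∈ p.support, m.support ∉ Δ) (d : ℕ)
    (hΔ : ∀ s : Finset (Fin n), s.card < d + 1 → s ∈ Δ)
    (hvan : Hvan (X : Fin n → MvPolynomial (Fin n) K) (MvPolynomial (Fin n) K ⧸ I) d) :
    StarCond K Δ (d + 1) := by
  intro φ hφ
  rw [hvan_quot] at hvan
  let f : Finset (Fin n) → MvPolynomial (Fin n) K := fun s => monomial (ex 0 s) (φ s)
  have hsupp : ∀ t : Finset (Fin n), (ex 0 t).support = t := by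
    intro t
    ext w
    rw [Finsupp.mem_support_iff, ex_apply]
    unfold ind
    split_ifs with h <;> simp [h]
  have hpos : ∀ (s : Finset (Fin n)) v, 0 ≤ (0 : Fin n → ℤ) v + ind s v := by
    intro s v; unfold ind; split_ifs <;> simp
  have hcf : cf 0 f = φ := by
    funext s
    rw [cf, if_pos (hpos s), coeff_monomial, if_pos rfl]
  have hkd : ∀ s, kd (X : Fin n → MvPolynomial (Fin n) K) f s =
      monomial (ex 0 s) (kd (fun _ => (1 : K)) φ s) := by
    intro s
    unfold kd
    rw [map_sum]
    refine Finset.sum_congr rfl fun v hv => ?_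
    have : ex 0 s = Finsupp.single v 1 + ex 0 (s.erase v) := by
      ext w
      rw [Finsupp.add_apply, ex_apply, ex_apply, ind_erase s v w hv, Finsupp.single_apply]
      by_cases hw : w = v
      · subst hw; simp [ind, hv]
      · simp [hw, Ne.symm hw]
    rw [ksg_C, smul_eq_mul, mul_one, smul_eq_mul, this, mul_assoc, X, monomial_mul, C_mul_monomial,
      one_mul]
  obtain ⟨g, hg⟩ := hvan f (fun s hs => by
    rw [hkd, hI]
    intro m hm hmΔ
    rw [mem_support_iff, coeff_monomial] at hm
    split_ifs at hm with h
    · rw [← h, hsupp] at hmΔ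
      exact hm (hφ s hmΔ hs)
    · exact hm rfl)
  have h1 : ∀ s, s.card = d → φ s = kd (fun _ => (1 : K)) (cf 0 g) s := by
    intro s hs
    rw [← cf_kd]
    have := cf_mem hI 0 (fun s => f s - kd X g s) s (hg s hs) (fun _ => by
      rw [hsupp]; exact hΔ s (by omega))
    rw [cf, if_pos (hpos s), coeff_sub, sub_eq_zero] at this
    rw [← hcf, cf, if_pos (hpos s), cf, if_pos (hpos s), this]
  intro s hs
  rw [kd_congr _ _ _ d h1 s hs, kd_kd]
  rfl

lemma pair_bnd (φ : Finset (Fin n) → K) (c : Finset (Fin n) →₀ K) :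
    Finsupp.linearCombination K φ (bnd K c) =
      Finsupp.linearCombination K (kd (fun _ => (1 : K)) φ) c := by
  have : (Finsupp.linearCombination K φ).comp (bnd K) =
      Finsupp.linearCombination K (kd (fun _ => (1 : K)) φ) := by
    ext s
    simp [bnd, kd, ksg, Finsupp.linearCombination_single]
  exact LinearMap.congr_fun this c

lemma pair_zero (φ : Finset (Fin n) → K) (c : Finset (Fin n) →₀ K)
    (h : ∀ s ∈ c.support, φ s = 0) : Finsupp.linearCombination K φ c = 0 := by
  rw [Finsupp.linearCombination_apply, Finsupp.sum]
  exact Finset.sum_eq_zero fun s hs => by rw [h s hs, smul_zero]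

lemma pair_congr (φ ψ : Finset (Fin n) → K) (c : Finset (Fin n) →₀ K)
    (h : ∀ s ∈ c.support, φ s = ψ s) :
    Finsupp.linearCombination K φ c = Finsupp.linearCombination K ψ c := by
  rw [Finsupp.linearCombination_apply, Finsupp.linearCombination_apply, Finsupp.sum, Finsupp.sum]
  exact Finset.sum_congr rfl fun s hs => by rw [h s hs]

lemma bnd_bnd (c : Finset (Fin n) →₀ K) : bnd K (bnd K c) = 0 := by
  classical
  ext t
  have h : ∀ e : Finset (Fin n) →₀ K,
      Finsupp.linearCombination K (fun s => if s = t then (1 : K) else 0) e = e t := by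
    intro e
    rw [Finsupp.linearCombination_apply, Finsupp.sum]
    simp
    exact fun h => h.symm
  rw [← h, pair_bnd, pair_bnd, kd_kd]
  exact pair_zero _ _ (fun _ _ => rfl)

lemma star_iff (d : ℕ) (hn : 0 < n) (hΔ : ∀ s : Finset (Fin n), s.card < d + 2 → s ∈ Δ) :
    StarCond K Δ (d + 2) ↔ ¬ homNonzero K Δ d := by
  classical
  constructor
  · rintro hstar ⟨c, hc, hbc, hnb⟩
    apply hnb
    let F : Submodule K (Finset (Fin n) →₀ K) :=
      Finsupp.supported K K {s | s ∈ Δ ∧ s.card = d + 2}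
    have hmem : c ∈ F.map (bnd K) := by
      by_contra hcon
      obtain ⟨l, hl, hker⟩ := Submodule.exists_le_ker_of_notMem hcon
      let φ : Finset (Fin n) → K := fun s => l (Finsupp.single s 1)
      have hlφ : ∀ e, l e = Finsupp.linearCombination K φ e := by
        intro e
        have : l = Finsupp.linearCombination K φ := by
          ext s; simp [φ]
        rw [this]
      have h1 := hstar φ (fun s hs hsc => by
        have h2 : bnd K (Finsupp.single s 1) ∈ F.map (bnd K) :=
          ⟨_, Finsupp.single_mem_supported K 1 ⟨hs, hsc⟩, rfl⟩
        have h3 := hker h2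
        rw [LinearMap.mem_ker, hlφ, pair_bnd] at h3
        simpa using h3)
      apply hl
      let v0 : Fin n := ⟨0, hn⟩
      rw [hlφ, pair_congr φ (kd (fun _ => (1 : K)) (kh K v0 φ)) c, ← pair_bnd, hbc, map_zero]
      intro s hs
      have hk := kd_kh (fun _ => (1 : K)) φ v0 s
      rw [one_smul] at hk
      rw [← hk, add_eq_left]
      unfold kh
      split_ifs with hv
      · rfl
      · rw [h1, smul_zero]
        rw [Finset.card_insert_of_notMem hv, (hc s hs).2]
    obtain ⟨b, hb, hbb⟩ := hmem
    exact ⟨b, fun s hs => (Finsupp.mem_supported K b).1 hb hs, hbb⟩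
  · intro hnon φ hφ s hs
    by_contra hne
    apply hnon
    refine ⟨bnd K (Finsupp.single s 1), ?_, bnd_bnd _, ?_⟩
    · intro t ht
      have hcard : t.card = d + 1 := by
        have h1 : bnd K (Finsupp.single s 1) ∈
            Finsupp.supported K K {t : Finset (Fin n) | t.card = d + 1} := by
          simp only [bnd, Finsupp.lsum_single, LinearMap.toSpanSingleton_apply, one_smul]
          refine Submodule.sum_mem _ fun v hv => Submodule.smul_mem _ _ ?_
          refine Finsupp.single_mem_supported K 1 ?_
          change (s.erase v).card = _
          rw [Finset.card_erase_of_mem hv, hs]; rfl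
        exact (Finsupp.mem_supported K _).1 h1 ht
      exact ⟨hΔ t (by omega), hcard⟩
    · rintro ⟨b, hb, hbb⟩
      apply hne
      have h1 := congrArg (Finsupp.linearCombination K φ) hbb
      rw [pair_bnd, pair_bnd, pair_zero] at h1
      · simpa using h1.symm
      · exact fun t ht => hφ t (hb t ht).1 (hb t ht).2

end Mono

section Match

variable {n : ℕ} {K : Type*} [Field K]

lemma mVerts_card (G : SimpleGraph (Fin n)) (M : Finset (Sym2 (Fin n))) (k : ℕ)
    (hM : IsKMatching G M k) : (mVerts M).card = 2 * k := by
  classical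
  have h1 : mVerts M = M.biUnion (fun e => e.toFinset) := by
    ext v; simp [mVerts]
  rw [h1, Finset.card_biUnion]
  · rw [Finset.sum_congr rfl (g := fun _ => 2)]
    · rw [Finset.sum_const, hM.2, smul_eq_mul, mul_comm]
    · intro e he
      exact Sym2.card_toFinset_of_not_isDiag e (G.not_isDiag_of_mem_edgeSet (hM.1.1 he))
  · intro e he f hf hef
    change Disjoint e.toFinset f.toFinset
    rw [Finset.disjoint_left]
    intro v hv hv'
    rw [Sym2.mem_toFinset] at hv hv'
    exact hM.1.2 he hf hef v hv hv'

lemma mem_matchPow (G : SimpleGraph (Fin n)) (k : ℕ) (p : MvPolynomial (Fin n) K) :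
    p ∈ matchPow K G k ↔ ∀ m ∈ p.support, m.support ∉ matchingComplex G k := by
  classical
  have hmon : ∀ M : Finset (Sym2 (Fin n)), matchMon K M = monomial (ex 0 (mVerts M)) 1 := by
    intro M
    unfold matchMon
    rw [monomial_eq, Finsupp.prod_fintype _ _ (fun _ => pow_zero _)]
    simp only [ex_apply, ind, C_1, one_mul]
    rw [← Finset.prod_subset (Finset.subset_univ (mVerts M))]
    · exact Finset.prod_congr rfl fun v hv => by simp [hv]
    · intro v _ hv; simp [hv]
  have : matchPow K G k = Ideal.span ((fun s => monomial s (1 : K)) ''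
      {e | ∃ M : Finset (Sym2 (Fin n)), IsKMatching G M k ∧ e = ex 0 (mVerts M)}) := by
    unfold matchPow
    congr 1
    ext u
    constructor
    · rintro ⟨M, hM, rfl⟩
      exact ⟨_, ⟨M, hM, rfl⟩, (hmon M).symm⟩
    · rintro ⟨_, ⟨M, hM, rfl⟩, rfl⟩
      exact ⟨M, hM, (hmon M).symm⟩
  rw [this, mem_ideal_span_monomial_image]
  refine forall₂_congr fun m _ => ?_
  simp only [matchingComplex, Set.mem_ofPred_eq, not_not]
  constructor
  · rintro ⟨_, ⟨M, hM, rfl⟩, hle⟩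
    refine ⟨M, hM, fun v hv => ?_⟩
    have := hle v
    rw [ex_apply] at this
    simp [ind, hv] at this
    rw [Finsupp.mem_support_iff]; omega
  · rintro ⟨M, hM, hle⟩
    refine ⟨_, ⟨M, hM, rfl⟩, fun v => ?_⟩
    rw [ex_apply]
    by_cases hv : v ∈ mVerts M
    · have := hle hv
      rw [Finsupp.mem_support_iff] at this
      simp [ind, hv]; omega
    · simp [ind, hv]

lemma exists_kmatching (G : SimpleGraph (Fin n)) (k : ℕ) (hk1 : 1 ≤ k) (hk : k ≤ matchNum G) :
    ∃ M, IsKMatching G M k := by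
  have hne : {k | ∃ M : Finset (Sym2 (Fin n)), IsKMatching G M k}.Nonempty := by
    by_contra hc
    rw [Set.not_nonempty_iff_eq_empty] at hc
    unfold matchNum at hk
    rw [hc] at hk
    simp at hk
    omega
  have hb : BddAbove {k | ∃ M : Finset (Sym2 (Fin n)), IsKMatching G M k} := by
    refine ⟨n, ?_⟩
    rintro j ⟨M, hM⟩
    have h1 := mVerts_card G M j hM
    have h2 := Finset.card_le_univ (mVerts M)
    rw [Fintype.card_fin] at h2
    omega
  obtain ⟨M, hM⟩ := Nat.sSup_mem hne hb
  change k ≤ sSup _ at hk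
  rw [← hM.2] at hk
  obtain ⟨M', hsub, hcard⟩ := Finset.exists_subset_card_eq hk
  exact ⟨M', ⟨⟨fun e he => hM.1.1 (hsub he), hM.1.2.mono (fun e he => hsub he)⟩, hcard⟩⟩

end Match

/-- For a graph `G` on `[n]` and `1 ≤ k ≤ ν(G)`:
`g_{I(G)}(k) = 0`, i.e. `depth(S/I(G)^{[k]}) = 2k − 1`, if and only if
`H̃_{2k−2}(Γ_k(G); K) ≠ 0`. -/
theorem min_depth_iff_homology_nonzero {K : Type*} [Field K] {n : ℕ}
    (G : SimpleGraph (Fin n)) (k : ℕ) (hk1 : 1 ≤ k) (hk : k ≤ matchNum G) :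
    qdepth K (matchPow K G k) = 2 * k - 1 ↔
      homNonzero K (matchingComplex G k) (2 * k - 2) := by
  obtain ⟨M, hM⟩ := exists_kmatching G k hk1 hk
  have hcard := mVerts_card G M k hM
  have hn : 2 * k ≤ n := by
    have := Finset.card_le_univ (mVerts M)
    rw [Fintype.card_fin] at this
    omega
  have hΔ : ∀ s : Finset (Fin n), s.card < 2 * k → s ∈ matchingComplex G k := by
    rintro s hs ⟨N, hN, hsub⟩
    have := Finset.card_le_card hsub
    rw [mVerts_card G N k hN] at this
    omega
  have hI := mem_matchPow (K := K) G k
  have hIm : matchPow K G k ≤ Ideal.span (Set.range (X : Fin n → MvPolynomial (Fin n) K)) := by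
    unfold matchPow
    rw [Ideal.span_le]
    rintro _ ⟨N, hN, rfl⟩
    have hc := mVerts_card G N k hN
    have hne : (mVerts N).Nonempty := by
      rw [← Finset.card_pos]; omega
    obtain ⟨v, hv⟩ := hne
    unfold matchMon
    rw [← Finset.mul_prod_erase _ _ hv]
    exact Ideal.mul_mem_right _ _ (Ideal.subset_span ⟨v, rfl⟩)
  obtain ⟨d, hd⟩ : ∃ d, 2 * k = d + 2 := ⟨2 * k - 2, by omega⟩
  rw [show 2 * k - 1 = d + 1 by omega, show 2 * k - 2 = d by omega]
  rw [hd] at hΔ hn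
  rw [qdepth_iff _ hIm (d + 1), ← not_iff_not, not_not, ← star_iff d (by omega) hΔ]
  · exact ⟨fun h => star_of_van hI (d + 1) hΔ h,
      fun h => van_of_star hI (d + 2) hΔ hn (d + 1) (by omega) h⟩
  · intro i hi
    exact van_of_star hI (d + 2) hΔ hn i (by omega)
      (fun φ hφ s hs => hφ s (hΔ s (by omega)) hs)
end

section
/- Let G be a finite simple graph with no isolated vertices and ν(G) ≥ 2. Suppose G is not a complete bipartite graph and the complement G^c is disconnected, and let 2 ≤ k ≤ ν(G). Then there exist two induced subgraphs G_1 and G_2 of G on disjoint vertex sets, a (k−1)-matching M of G, and a vertex v of G such that: (1) V(G_1) ∪ V(G_2) = V(G); (2) {x_1, x_2} is an edge of G for every x_1 ∈ V(G_1) and x_2 ∈ V(G_2); (3) v ∉ e for every e ∈ M; (4) M ∩ E(G_1) ≠ ∅; and (5) v ∈ V(G_2). -/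
open MvPolynomial

theorem aux_core {n : ℕ} (G : SimpleGraph (Fin n)) (A B : Set (Fin n))
    (hAB : A ∪ B = Set.univ) (hd : Disjoint A B) (hadj : ∀ a ∈ A, ∀ b ∈ B, G.Adj a b)
    (b0 : Fin n) (hb0 : b0 ∈ B) (a a' : Fin n) (ha : a ∈ A) (ha' : a' ∈ A) (haa : G.Adj a a')
    (k : ℕ) (hk2 : 2 ≤ k) (N : Finset (Sym2 (Fin n))) (hN : IsKMatching G N k) :
    ∃ (A B : Set (Fin n)) (M : Finset (Sym2 (Fin n))) (v : Fin n),
      A ∪ B = Set.univ ∧ Disjoint A B ∧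
      (∀ a ∈ A, ∀ b ∈ B, G.Adj a b) ∧
      IsKMatching G M (k - 1) ∧
      (∀ e ∈ M, v ∉ e) ∧
      (∃ e ∈ M, ∀ x, x ∈ e → x ∈ A) ∧
      v ∈ B := by
  classical
  have hdis : ∀ x, x ∈ A → x ∈ B → False := fun x h1 h2 => Set.disjoint_left.1 hd h1 h2
  have hcov : ∀ x, x ∈ A ∨ x ∈ B := fun x => by
    have : x ∈ A ∪ B := by rw [hAB]; trivial
    exact this
  obtain ⟨⟨hE, hP⟩, hc⟩ := hN
  have hP' : ∀ e ∈ N, ∀ f ∈ N, ∀ v, v ∈ e → v ∈ f → e = f := by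
    intro e he f hf v h1 h2
    by_contra hne
    exact hP (Finset.mem_coe.2 he) (Finset.mem_coe.2 hf) hne v h1 h2
  have herase : ∀ f ∈ N, IsKMatching G (N.erase f) (k - 1) := by
    intro f hf
    refine ⟨⟨fun e he => hE (Finset.mem_of_mem_erase (Finset.mem_coe.1 he)), ?_⟩, ?_⟩
    · exact hP.mono (by intro e he; exact Finset.mem_of_mem_erase (Finset.mem_coe.1 he))
    · rw [Finset.card_erase_of_mem hf, hc]
  by_cases h1 : ∃ e ∈ N, ∀ x, x ∈ e → x ∈ A
  · obtain ⟨e0, he0, hA0⟩ := h1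
    by_cases h2 : ∃ f ∈ N, ∃ b, b ∈ f ∧ b ∈ B
    · obtain ⟨f, hf, b, hbf, hb⟩ := h2
      refine ⟨A, B, N.erase f, b, hAB, hd, hadj, herase f hf, ?_, ⟨e0, ?_, hA0⟩, hb⟩
      · intro e he hbe
        have := Finset.mem_erase.1 he
        exact this.1 (hP' e this.2 f hf b hbe hbf)
      · refine Finset.mem_erase.2 ⟨?_, he0⟩
        rintro rfl
        exact hdis b (hA0 b hbf) hb
    · push Not at h2
      obtain ⟨f, hf, hne⟩ := Finset.exists_mem_ne (by omega : 1 < N.card) e0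
      refine ⟨A, B, N.erase f, b0, hAB, hd, hadj, herase f hf, ?_,
        ⟨e0, Finset.mem_erase.2 ⟨hne.symm, he0⟩, hA0⟩, hb0⟩
      intro e he hbe
      exact h2 e (Finset.mem_of_mem_erase he) b0 hbe hb0
  · push Not at h1
    have hcard : ∀ x, (N.filter (fun f => x ∈ f)).card ≤ 1 := by
      intro x
      rw [Finset.card_le_one]
      intro e he f hf
      rw [Finset.mem_filter] at he hf
      exact hP' e he.1 f hf.1 x he.2 hf.2
    have hle : k - 2 ≤ (N \ (N.filter (fun f => a ∈ f) ∪ N.filter (fun f => a' ∈ f))).card := by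
      have t1 := Finset.le_card_sdiff (N.filter (fun f => a ∈ f) ∪ N.filter (fun f => a' ∈ f)) N
      have t2 := Finset.card_union_le (N.filter (fun f => a ∈ f)) (N.filter (fun f => a' ∈ f))
      have := hcard a
      have := hcard a'
      omega
    obtain ⟨N', hN', hcN'⟩ := Finset.exists_subset_card_eq hle
    have hprop : ∀ f ∈ N', f ∈ N ∧ a ∉ f ∧ a' ∉ f := by
      intro f hf
      have := hN' hf
      simp only [Finset.mem_sdiff, Finset.mem_union, Finset.mem_filter] at this
      tauto
    obtain ⟨f, hf, hfN'⟩ := Finset.exists_mem_notMem_of_card_lt_card (by omega : N'.card < N.card)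
    obtain ⟨b, hbf, hbA⟩ := h1 f hf
    have hb : b ∈ B := (hcov b).resolve_left hbA
    have hnot : s(a, a') ∉ N' := fun h => (hprop _ h).2.1 (Sym2.mem_mk_left a a')
    refine ⟨A, B, insert s(a, a') N', b, hAB, hd, hadj, ⟨⟨?_, ?_⟩, ?_⟩, ?_,
      ⟨s(a, a'), Finset.mem_insert_self _ _, ?_⟩, hb⟩
    · intro e he
      rcases Finset.mem_insert.1 (Finset.mem_coe.1 he) with rfl | he
      · exact haa
      · exact hE (Finset.mem_coe.2 (hprop e he).1)
    · intro e he g hg hne v hve hvg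
      rcases Finset.mem_insert.1 (Finset.mem_coe.1 he) with rfl | he1 <;>
      rcases Finset.mem_insert.1 (Finset.mem_coe.1 hg) with rfl | hg1
      · exact hne rfl
      · rcases Sym2.mem_iff.1 hve with rfl | rfl
        · exact (hprop g hg1).2.1 hvg
        · exact (hprop g hg1).2.2 hvg
      · rcases Sym2.mem_iff.1 hvg with rfl | rfl
        · exact (hprop e he1).2.1 hve
        · exact (hprop e he1).2.2 hve
      · exact hne (hP' e (hprop e he1).1 g (hprop g hg1).1 v hve hvg)
    · rw [Finset.card_insert_of_notMem hnot]; omega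
    · intro e he hbe
      rcases Finset.mem_insert.1 he with rfl | he
      · rcases Sym2.mem_iff.1 hbe with rfl | rfl
        · exact hbA ha
        · exact hbA ha'
      · have := hP' e (hprop e he).1 f hf b hbe hbf
        subst this
        exact hfN' he
    · intro x hx
      rcases Sym2.mem_iff.1 hx with rfl | rfl <;> assumption

/-- Let `G` be a graph with no isolated vertices and `ν(G) ≥ 2`
which is not complete bipartite and whose complement is disconnected, and let
`2 ≤ k ≤ ν(G)`. Then there are induced subgraphs `G_1`, `G_2` on complementary
disjoint vertex sets `A`, `B` with all edges between `A` and `B` present, a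
`(k−1)`-matching `M`, and a vertex `v` avoiding `M`, such that `M` has an edge
inside `A` and `v ∈ B`. -/
theorem exists_matching_and_vertex {n : ℕ} (G : SimpleGraph (Fin n))
    (hiso : ∀ v : Fin n, ∃ w, G.Adj v w)
    (hnu : 2 ≤ matchNum G)
    (hnotbip : ¬ ∃ A : Set (Fin n), ∀ x y : Fin n,
      G.Adj x y ↔ ((x ∈ A ∧ y ∉ A) ∨ (x ∉ A ∧ y ∈ A)))
    (hdisc : ¬ (Gᶜ).Connected)
    (k : ℕ) (hk2 : 2 ≤ k) (hk : k ≤ matchNum G) :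
    ∃ (A B : Set (Fin n)) (M : Finset (Sym2 (Fin n))) (v : Fin n),
      A ∪ B = Set.univ ∧ Disjoint A B ∧
      (∀ a ∈ A, ∀ b ∈ B, G.Adj a b) ∧
      IsKMatching G M (k - 1) ∧
      (∀ e ∈ M, v ∉ e) ∧
      (∃ e ∈ M, ∀ x, x ∈ e → x ∈ A) ∧
      v ∈ B := by
  classical
  obtain ⟨N, hN⟩ : ∃ N, IsKMatching G N k := by
    have hmem : matchNum G ∈ {k | ∃ M : Finset (Sym2 (Fin n)), IsKMatching G M k} := by
      refine Nat.sSup_mem ⟨0, ∅, ⟨by simp, by simp⟩, rfl⟩ ⟨Fintype.card (Sym2 (Fin n)), ?_⟩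
      rintro m ⟨M, -, rfl⟩
      exact Finset.card_le_univ M
    obtain ⟨M, ⟨hE, hP⟩, hc⟩ := hmem
    obtain ⟨N, hNM, hNc⟩ := Finset.exists_subset_card_eq (by omega : k ≤ M.card)
    exact ⟨N, ⟨fun e he => hE (hNM he), hP.mono (by exact_mod_cast hNM)⟩, hNc⟩
  have hne : Nonempty (Fin n) := by
    by_contra h
    exact hnotbip ⟨∅, fun x => (h ⟨x⟩).elim⟩
  have hpre : ¬ (Gᶜ).Preconnected := fun h => hdisc ⟨h⟩
  unfold SimpleGraph.Preconnected at hpre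
  push Not at hpre
  obtain ⟨u, w, huw⟩ := hpre
  let A : Set (Fin n) := {x | Gᶜ.Reachable u x}
  have hadj : ∀ a ∈ A, ∀ b ∈ Aᶜ, G.Adj a b := by
    intro a ha b hb
    by_contra h
    have hab : a ≠ b := by rintro rfl; exact hb ha
    have : Gᶜ.Adj a b := by rw [SimpleGraph.compl_adj]; exact ⟨hab, h⟩
    have ha' : Gᶜ.Reachable u a := ha
    exact hb (ha'.trans this.reachable)
  have huA : u ∈ A := SimpleGraph.Reachable.refl u
  have hwA : w ∈ Aᶜ := huw
  by_cases h1 : ∃ a a', a ∈ A ∧ a' ∈ A ∧ G.Adj a a'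
  · obtain ⟨a, a', ha, ha', h⟩ := h1
    exact aux_core G A Aᶜ (Set.union_compl_self A) disjoint_compl_right hadj w hwA a a' ha ha' h
      k hk2 N hN
  by_cases h2 : ∃ a a', a ∈ Aᶜ ∧ a' ∈ Aᶜ ∧ G.Adj a a'
  · obtain ⟨a, a', ha, ha', h⟩ := h2
    exact aux_core G Aᶜ A (Set.compl_union_self A) disjoint_compl_left
      (fun x hx y hy => (hadj y hy x hx).symm) u huA a a' ha ha' h k hk2 N hN
  exfalso
  refine hnotbip ⟨A, fun x y => ⟨fun h => ?_, ?_⟩⟩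
  · by_cases hx : x ∈ A <;> by_cases hy : y ∈ A
    · exact (h1 ⟨x, y, hx, hy, h⟩).elim
    · exact Or.inl ⟨hx, hy⟩
    · exact Or.inr ⟨hx, hy⟩
    · exact (h2 ⟨x, y, hx, hy, h⟩).elim
  · rintro (⟨hx, hy⟩ | ⟨hx, hy⟩)
    · exact hadj x hx y hy
    · exact (hadj y hy x hx).symm
end

section
/- Let G be a finite simple graph on [n] with no isolated vertices and ν(G) ≥ 2 which is not complete bipartite, and suppose the complement G^c is disconnected. For 2 ≤ k ≤ ν(G), let Δ be the simplicial complex whose facets are the vertex sets V(M) of the k-matchings M of G (the facet complex of I(G)^{[k]}). Then Δ admits a well-ordered facet cover of cardinality n − 2k + 1. -/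
open MvPolynomial

/-- The facets of the facet complex of `I(G)^{[k]}`: the vertex sets of the
`k`-matchings of `G`. -/
def mFacets {σ : Type*} [Fintype σ] [DecidableEq σ]
    (G : SimpleGraph σ) (k : ℕ) : Set (Finset σ) :=
  {F | ∃ M : Finset (Sym2 σ), IsKMatching G M k ∧ F = mVerts M}

section Helpers

variable {n : ℕ}

lemma h_mVerts_card (G : SimpleGraph (Fin n)) (M : Finset (Sym2 (Fin n)))
    (h : IsMatching G M) : (mVerts M).card = 2 * M.card := by
  have : mVerts M = M.biUnion (fun e => e.toFinset) := by
    ext v; simp [mVerts, Sym2.mem_toFinset]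
  rw [this, Finset.card_biUnion]
  · rw [Finset.sum_congr rfl (g := fun _ => 2)]
    · simp [mul_comm]
    · intro e he
      exact Sym2.card_toFinset_of_not_isDiag e (G.not_isDiag_of_mem_edgeSet (h.1 he))
  · intro e he f hf hef
    rw [Function.onFun, Finset.disjoint_left]
    intro v hv hv'
    rw [Sym2.mem_toFinset] at hv hv'
    exact h.2 he hf hef v hv hv'

lemma h_subset {G : SimpleGraph (Fin n)} {M N : Finset (Sym2 (Fin n))}
    (h : IsMatching G M) (hN : N ⊆ M) : IsMatching G N :=
  ⟨fun _ he => h.1 (hN he), h.2.mono (by exact_mod_cast hN)⟩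

lemma h_insert {G : SimpleGraph (Fin n)} {M : Finset (Sym2 (Fin n))} {a b : Fin n} {k : ℕ}
    (h : IsKMatching G M k) (hab : G.Adj a b) (ha : a ∉ mVerts M) (hb : b ∉ mVerts M) :
    IsKMatching G (insert s(a, b) M) (k + 1) ∧
      mVerts (insert s(a, b) M) = insert a (insert b (mVerts M)) := by
  simp only [mVerts, Finset.mem_filter, Finset.mem_univ, true_and, not_exists, not_and] at ha hb
  obtain ⟨⟨h1, h2⟩, h3⟩ := h
  refine ⟨⟨⟨?_, ?_⟩, ?_⟩, ?_⟩
  · intro e he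
    simp only [Finset.coe_insert, Set.mem_insert_iff, Finset.mem_coe] at he
    rcases he with rfl | he
    · exact hab
    · exact h1 he
  · intro e he f hf hef v hve hvf
    simp only [Finset.coe_insert, Set.mem_insert_iff, Finset.mem_coe] at he hf
    rcases he with rfl | he <;> rcases hf with rfl | hf
    · exact hef rfl
    · rcases Sym2.mem_iff.1 hve with rfl | rfl
      · exact ha f hf hvf
      · exact hb f hf hvf
    · rcases Sym2.mem_iff.1 hvf with rfl | rfl
      · exact ha e he hve
      · exact hb e he hve
    · exact h2 he hf hef v hve hvf
  · rw [Finset.card_insert_of_notMem, h3]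
    intro hm
    exact ha _ hm (Sym2.mem_mk_left a b)
  · ext v
    simp [mVerts, or_assoc]

lemma h_exists_kmatching (G : SimpleGraph (Fin n)) (k : ℕ) (hk : k ≤ matchNum G) :
    ∃ M, IsKMatching G M k := by
  have hne : {k | ∃ M : Finset (Sym2 (Fin n)), IsKMatching G M k}.Nonempty :=
    ⟨0, ∅, by simp [IsKMatching, IsMatching]⟩
  have hbd : BddAbove {k | ∃ M : Finset (Sym2 (Fin n)), IsKMatching G M k} := by
    refine ⟨Fintype.card (Sym2 (Fin n)), ?_⟩
    rintro k ⟨M, hM⟩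
    rw [← hM.2]
    exact Finset.card_le_univ M
  obtain ⟨M, hM⟩ := Nat.sSup_mem hne hbd
  change IsKMatching G M (matchNum G) at hM
  obtain ⟨N, hN, hc⟩ := Finset.exists_subset_card_eq (hk.trans hM.2.ge)
  exact ⟨N, h_subset hM.1 hN, hc⟩

lemma h_filter_card {G : SimpleGraph (Fin n)} {M : Finset (Sym2 (Fin n))}
    (h : IsMatching G M) (b : Fin n) : (M.filter (fun e => b ∈ e)).card ≤ 1 := by
  rw [Finset.card_le_one]
  intro e he f hf
  simp only [Finset.mem_filter] at he hf
  by_contra hef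
  exact h.2 he.1 hf.1 hef b he.2 hf.2

lemma h_avoid {G : SimpleGraph (Fin n)} {M : Finset (Sym2 (Fin n))} {k : ℕ}
    (h : IsKMatching G M k) (a b c : Fin n) (hab : ∀ e ∈ M, a ∈ e → b ∈ e) :
    ∃ N, IsKMatching G N (k - 2) ∧ a ∉ mVerts N ∧ b ∉ mVerts N ∧ c ∉ mVerts N := by
  classical
  have hc : k - 2 ≤ ((M \ M.filter (fun e => b ∈ e)) \ M.filter (fun e => c ∈ e)).card := by
    have h1 := Finset.le_card_sdiff (M.filter (fun e => b ∈ e)) M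
    have h2 := Finset.le_card_sdiff (M.filter (fun e => c ∈ e)) (M \ M.filter (fun e => b ∈ e))
    have h3 := h_filter_card h.1 b
    have h4 := h_filter_card h.1 c
    have := h.2
    omega
  obtain ⟨N, hN, hcard⟩ := Finset.exists_subset_card_eq hc
  have key : ∀ e ∈ N, e ∈ M ∧ b ∉ e ∧ c ∉ e := by
    intro e he
    have := hN he
    simp only [Finset.mem_sdiff, Finset.mem_filter] at this
    tauto
  refine ⟨N, ⟨h_subset h.1 (fun e he => (key e he).1), hcard⟩, ?_, ?_, ?_⟩ <;>
    simp only [mVerts, Finset.mem_filter, Finset.mem_univ, true_and, not_exists, not_and]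
  · intro e he ha
    exact (key e he).2.1 (hab e (key e he).1 ha)
  · intro e he; exact (key e he).2.1
  · intro e he; exact (key e he).2.2

lemma h_triangle (G : SimpleGraph (Fin n)) (S : Set (Fin n))
    (hS : ∃ a, a ∈ S) (hS' : ∃ a, a ∉ S)
    (hjoin : ∀ a b, ¬ (a ∈ S ↔ b ∈ S) → G.Adj a b)
    (hedge : ∃ y z, G.Adj y z ∧ (y ∈ S ↔ z ∈ S))
    (k : ℕ) (M : Finset (Sym2 (Fin n))) (hM : IsKMatching G M k) :
    ∃ x y z N, G.Adj y z ∧ (y ∈ S ↔ z ∈ S) ∧ ¬ (x ∈ S ↔ y ∈ S) ∧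
      IsKMatching G N (k - 2) ∧ x ∉ mVerts N ∧ y ∉ mVerts N ∧ z ∉ mVerts N := by
  have hopp : ∀ y, ∃ x, ¬ (x ∈ S ↔ y ∈ S) := by
    obtain ⟨s, hs⟩ := hS
    obtain ⟨t, ht⟩ := hS'
    intro y
    by_cases hy : y ∈ S
    · exact ⟨t, by tauto⟩
    · exact ⟨s, by tauto⟩
  by_cases hin : ∃ y z, s(y, z) ∈ M ∧ (y ∈ S ↔ z ∈ S)
  · obtain ⟨y, z, hyz, hs⟩ := hin
    obtain ⟨x, hx⟩ := hopp y
    obtain ⟨N, hN, h1, h2, h3⟩ := h_avoid hM y z x (by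
      intro e he hy
      by_cases hne : e = s(y, z)
      · rw [hne]; exact Sym2.mem_mk_right y z
      · exact absurd (Sym2.mem_mk_left y z) (hM.1.2 he hyz hne y hy))
    exact ⟨x, y, z, N, hM.1.1 hyz, hs, hx, hN, h3, h1, h2⟩
  · obtain ⟨y, z, hyz, hs⟩ := hedge
    by_cases hy : ∃ e ∈ M, y ∈ e
    · obtain ⟨e, he, hye⟩ := hy
      obtain ⟨x, rfl⟩ := Sym2.mem_iff_exists.1 hye
      have hx : ¬ (x ∈ S ↔ y ∈ S) := fun hh => hin ⟨y, x, he, hh.symm⟩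
      obtain ⟨N, hN, h1, h2, h3⟩ := h_avoid hM y x z (by
        intro e' he' hy
        by_cases hne : e' = s(y, x)
        · rw [hne]; exact Sym2.mem_mk_right y x
        · exact absurd (Sym2.mem_mk_left y x) (hM.1.2 he' he hne y hy))
      exact ⟨x, y, z, N, hyz, hs, hx, hN, h2, h1, h3⟩
    · obtain ⟨x, hx⟩ := hopp y
      obtain ⟨N, hN, h1, h2, h3⟩ := h_avoid hM y z x (by
        intro e he hy'
        exact absurd ⟨e, he, hy'⟩ hy)
      exact ⟨x, y, z, N, hyz, hs, hx, hN, h3, h1, h2⟩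

lemma h_core (G : SimpleGraph (Fin n)) (S : Set (Fin n))
    (hjoin : ∀ a b, ¬ (a ∈ S ↔ b ∈ S) → G.Adj a b)
    (k : ℕ) (hk2 : 2 ≤ k) (x y z : Fin n) (N : Finset (Sym2 (Fin n)))
    (hyz : G.Adj y z) (hs : y ∈ S ↔ z ∈ S) (hx : ¬ (x ∈ S ↔ y ∈ S))
    (hN : IsKMatching G N (k - 2)) (hxN : x ∉ mVerts N) (hyN : y ∉ mVerts N)
    (hzN : z ∉ mVerts N) :
    ∃ C : Finset (Fin n), C.card = 2 * k - 1 ∧ ∀ v, v ∉ C → insert v C ∈ mFacets G k := by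
  have hxy : x ≠ y := by rintro rfl; tauto
  have hxz : x ≠ z := by rintro rfl; tauto
  have hyz' : y ≠ z := hyz.ne
  have hk : k - 2 + 1 + 1 = k := by omega
  refine ⟨insert x (insert y (insert z (mVerts N))), ?_, ?_⟩
  · rw [Finset.card_insert_of_notMem (by simp [*]), Finset.card_insert_of_notMem (by simp [*]),
      Finset.card_insert_of_notMem hzN, h_mVerts_card G N hN.1, hN.2]
    omega
  · intro v hv
    simp only [Finset.mem_insert, not_or] at hv
    obtain ⟨hvx, hvy, hvz, hvN⟩ := hv
    by_cases hvS : v ∈ S ↔ x ∈ S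
    · obtain ⟨h1, h1'⟩ := h_insert hN (hjoin x z (by tauto)) hxN hzN
      obtain ⟨h2, h2'⟩ := h_insert h1 (hjoin v y (by tauto)) (by simp [*]) (by
        simp [*, hxy.symm])
      rw [hk] at h2
      refine ⟨_, h2, ?_⟩
      rw [h2', h1']
      ext w; simp; tauto
    · obtain ⟨h1, h1'⟩ := h_insert hN hyz hyN hzN
      obtain ⟨h2, h2'⟩ := h_insert h1 (hjoin v x hvS) (by simp [*]) (by simp [*])
      rw [hk] at h2
      exact ⟨_, h2, by rw [h2', h1']⟩

lemma h_list (G : SimpleGraph (Fin n)) (k : ℕ) (hk2 : 2 ≤ k) (hn : 2 * k ≤ n)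
    (C : Finset (Fin n)) (hC : C.card = 2 * k - 1)
    (hCv : ∀ v, v ∉ C → insert v C ∈ mFacets G k) :
    ∃ L : List (Finset (Fin n)),
      L.length = n - 2 * k + 1 ∧ L.Nodup ∧
      (∀ F ∈ L, F ∈ mFacets G k) ∧
      (∀ v : Fin n, (∃ H ∈ mFacets G k, v ∈ H) → ∃ F ∈ L, v ∈ F) ∧
      (∀ F ∈ L, ¬ ∀ v : Fin n, (∃ H ∈ mFacets G k, v ∈ H) →
        ∃ F' ∈ L, F' ≠ F ∧ v ∈ F') ∧
      (∀ H ∈ mFacets G k, H ∉ L → ∃ i : Fin L.length, (i : ℕ) + 2 ≤ L.length ∧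
        ∀ x ∈ L.get i, x ∈ H ∨ ∃ F ∈ L.drop ((i : ℕ) + 1), x ∈ F) := by
  obtain ⟨l, hl⟩ : ∃ l, l = (Cᶜ : Finset (Fin n)).toList := ⟨_, rfl⟩
  have hmem : ∀ v, v ∈ l ↔ v ∉ C := by intro v; simp [hl]
  have hnd : l.Nodup := by rw [hl]; exact Finset.nodup_toList _
  have hlen : l.length = n - 2 * k + 1 := by
    rw [hl, Finset.length_toList, Finset.card_compl, hC, Fintype.card_fin]; omega
  have hinj : ∀ v ∈ l, ∀ w ∈ l, insert v C = insert w C → v = w := by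
    intro v hv w hw h
    have : v ∈ insert w C := h ▸ Finset.mem_insert_self v C
    rcases Finset.mem_insert.1 this with h | h
    · exact h
    · exact absurd h ((hmem v).1 hv)
  have hcov : ∀ v, ∃ w, w ∈ l ∧ v ∈ insert w C := by
    intro v
    by_cases hv : v ∈ C
    · exact ⟨l[0]'(by omega), List.getElem_mem _, by simp [hv]⟩
    · exact ⟨v, (hmem v).2 hv, by simp⟩
  refine ⟨l.map (fun v => insert v C), by simp [hlen], ?_, ?_, ?_, ?_, ?_⟩
  · exact hnd.map_on (fun v hv w hw h => hinj v hv w hw h)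
  · intro F hF
    obtain ⟨v, hv, rfl⟩ := List.mem_map.1 hF
    exact hCv v ((hmem v).1 hv)
  · intro v _
    obtain ⟨w, hw, hvw⟩ := hcov v
    exact ⟨_, List.mem_map.2 ⟨w, hw, rfl⟩, hvw⟩
  · intro F hF hall
    obtain ⟨v, hv, rfl⟩ := List.mem_map.1 hF
    obtain ⟨F', hF', hne, hvF⟩ := hall v ⟨_, hCv v ((hmem v).1 hv), by simp⟩
    obtain ⟨w, hw, rfl⟩ := List.mem_map.1 hF'
    rcases Finset.mem_insert.1 hvF with h | h
    · subst h; exact hne rfl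
    · exact (hmem v).1 hv h
  · intro H hH hHL
    obtain ⟨M, hM, rfl⟩ := hH
    have hHc : (mVerts M).card = 2 * k := by rw [h_mVerts_card G M hM.1, hM.2]
    have hlast : n - 2 * k < l.length := by omega
    have hex : ∃ v ∈ mVerts M, v ∉ insert (l[n - 2 * k]) C := by
      by_contra hcon
      push Not at hcon
      apply hHL
      refine List.mem_map.2 ⟨l[n - 2 * k], List.getElem_mem _, ?_⟩
      symm
      apply Finset.eq_of_subset_of_card_le hcon
      rw [hHc, Finset.card_insert_of_notMem ((hmem _).1 (List.getElem_mem _)), hC]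
      omega
    obtain ⟨v, hvM, hvC⟩ := hex
    simp only [Finset.mem_insert, not_or] at hvC
    obtain ⟨i, hi, rfl⟩ := List.getElem_of_mem ((hmem v).2 hvC.2)
    have hne : i ≠ n - 2 * k := by rintro rfl; exact hvC.1 rfl
    refine ⟨⟨i, by simpa using hi⟩, by simp only [List.length_map]; omega, ?_⟩
    intro x hx
    simp only [List.get_eq_getElem, List.getElem_map, Finset.mem_insert] at hx
    rcases hx with rfl | hx
    · exact Or.inl hvM
    · right
      refine ⟨insert (l[n - 2 * k]) C, ?_, by simp [hx]⟩
      rw [List.mem_drop_iff_getElem]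
      refine ⟨n - 2 * k - (i + 1), by simp only [List.length_map]; omega, ?_⟩
      simp only [List.getElem_map]
      congr 2
      omega

end Helpers

/-- Let `G` be a graph on `[n]` with no isolated vertices,
`ν(G) ≥ 2`, not complete bipartite, with disconnected complement, and let
`2 ≤ k ≤ ν(G)`. Then the facet complex `Δ` of `I(G)^{[k]}` admits a well-ordered
facet cover `F_1, …, F_{n−2k+1}`: a minimal facet cover such that every other
facet `H` satisfies `F_i ⊆ H ∪ F_{i+1} ∪ ⋯ ∪ F_m` for some `i ≤ m − 1`. -/
theorem exists_well_ordered_facet_cover {n : ℕ} (G : SimpleGraph (Fin n))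
    (hiso : ∀ v : Fin n, ∃ w, G.Adj v w)
    (hnu : 2 ≤ matchNum G)
    (hnotbip : ¬ ∃ A : Set (Fin n), ∀ x y : Fin n,
      G.Adj x y ↔ ((x ∈ A ∧ y ∉ A) ∨ (x ∉ A ∧ y ∈ A)))
    (hdisc : ¬ (Gᶜ).Connected)
    (k : ℕ) (hk2 : 2 ≤ k) (hk : k ≤ matchNum G) :
    ∃ L : List (Finset (Fin n)),
      L.length = n - 2 * k + 1 ∧ L.Nodup ∧
      (∀ F ∈ L, F ∈ mFacets G k) ∧
      (∀ v : Fin n, (∃ H ∈ mFacets G k, v ∈ H) → ∃ F ∈ L, v ∈ F) ∧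
      (∀ F ∈ L, ¬ ∀ v : Fin n, (∃ H ∈ mFacets G k, v ∈ H) →
        ∃ F' ∈ L, F' ≠ F ∧ v ∈ F') ∧
      (∀ H ∈ mFacets G k, H ∉ L → ∃ i : Fin L.length, (i : ℕ) + 2 ≤ L.length ∧
        ∀ x ∈ L.get i, x ∈ H ∨ ∃ F ∈ L.drop ((i : ℕ) + 1), x ∈ F) := by
  obtain ⟨M, hM⟩ := h_exists_kmatching G k hk
  have hn : 2 * k ≤ n := by
    have h1 := h_mVerts_card G M hM.1
    have h2 := Finset.card_le_univ (mVerts M)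
    rw [Fintype.card_fin, h1, hM.2] at h2
    exact h2
  have hne : Nonempty (Fin n) := ⟨⟨0, by omega⟩⟩
  have hpre : ¬ (Gᶜ).Preconnected := fun h => hdisc ⟨h⟩
  unfold SimpleGraph.Preconnected at hpre
  push Not at hpre
  obtain ⟨u, v, huv⟩ := hpre
  obtain ⟨S, hSdef⟩ : ∃ S : Set (Fin n), S = {w | (Gᶜ).Reachable u w} := ⟨_, rfl⟩
  have hjoin1 : ∀ a b, a ∈ S → b ∉ S → G.Adj a b := by
    intro a b ha hb
    subst hSdef
    by_contra hab
    apply hb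
    have hne : a ≠ b := by rintro rfl; exact hb ha
    have : (Gᶜ).Adj a b := by rw [SimpleGraph.compl_adj]; exact ⟨hne, hab⟩
    exact SimpleGraph.Reachable.trans ha this.reachable
  have hjoin : ∀ a b, ¬ (a ∈ S ↔ b ∈ S) → G.Adj a b := by
    intro a b hab
    by_cases ha : a ∈ S
    · exact hjoin1 a b ha (by tauto)
    · exact (hjoin1 b a (by tauto) ha).symm
  have hedge : ∃ y z, G.Adj y z ∧ (y ∈ S ↔ z ∈ S) := by
    by_contra hcon
    push Not at hcon
    apply hnotbip
    refine ⟨S, fun x y => ⟨fun h => ?_, fun h => hjoin x y (by tauto)⟩⟩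
    have := hcon x y h
    tauto
  obtain ⟨x, y, z, N, h1, h2, h3, h4, h5, h6, h7⟩ :=
    h_triangle G S ⟨u, by subst hSdef; exact SimpleGraph.Reachable.refl u⟩
      ⟨v, by subst hSdef; exact huv⟩ hjoin hedge k M hM
  obtain ⟨C, hC, hCv⟩ := h_core G S hjoin k hk2 x y z N h1 h2 h3 h4 h5 h6 h7
  exact h_list G k hk2 hn C hC hCv
end

section
/- Let G be a finite simple graph on [n] and let 2 ≤ k ≤ ν(G). If G contains a dominating clique K_{2k−1} (a complete subgraph on 2k − 1 vertices whose vertex set is a dominating set), then g_{I(G)}(k) = 0, i.e. depth(S/I(G)^{[k]}) = 2k − 1. -/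
open MvPolynomial

namespace DomClique
open RingTheory.Sequence CategoryTheory Abelian Pointwise

universe u

lemma ass_step {R : Type u} [CommRing R] [IsNoetherianRing R] (m p : Ideal R) [m.IsPrime]
    (hpm : p ≤ m) {M : Type u} [AddCommGroup M] [Module R M] [Module.Finite R M]
    (y : M) (hy : ∀ r : R, r • y = 0 ↔ r ∈ p) (x : R) (hxm : x ∈ m) (hx : IsSMulRegular M x) :
    ∃ q : Ideal R, q.IsPrime ∧ q ≤ m ∧ p < q ∧
      ∃ y' : QuotSMulTop x M, ∀ r : R, r • y' = 0 ↔ r ∈ q := by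
  have hxp : x ∉ p := by
    intro h
    have h1 : x • y = x • (0 : M) := by rw [smul_zero]; exact (hy x).2 h
    have h2 : y = 0 := hx h1
    have : (1 : R) ∈ p := (hy 1).1 (by rw [h2, smul_zero])
    exact (Ideal.ne_top_iff_one m).1 Ideal.IsPrime.ne_top' (hpm this)
  let N : Submodule R M := Submodule.torsionBySet R M (p : Set R)
  have hN : ∀ z : M, z ∈ N ↔ ∀ a ∈ p, a • z = 0 := by
    intro z
    simp [N, Submodule.mem_torsionBySet_iff]
  have key : ∃ z ∈ N, ∀ s : R, (∃ w ∈ N, s • z = x • w) → s ∈ m := by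
    by_contra hcon
    push Not at hcon
    have hfg : N.FG := IsNoetherian.noetherian N
    -- a common multiplier
    have hs : ∃ s : R, s ∉ m ∧ ∀ z ∈ N, ∃ w ∈ N, s • z = x • w := by
      obtain ⟨S, hS⟩ := hfg
      have : ∀ T : Finset M, (T : Set M) ⊆ N → ∃ s : R, s ∉ m ∧ ∀ z ∈ T, ∃ w ∈ N, s • z = x • w := by
        classical
        intro T
        induction T using Finset.induction_on with
        | empty =>
          intro _
          exact ⟨1, (Ideal.ne_top_iff_one m).1 Ideal.IsPrime.ne_top', by simp⟩
        | insert a T ha ih =>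
          intro hT
          obtain ⟨s, hs, h⟩ := ih (fun t ht => hT (by simp [Finset.mem_coe.1 ht]))
          obtain ⟨s', ⟨w, hw, hsw⟩, hs'⟩ := hcon a (hT (by simp))
          refine ⟨s * s', fun h => (Ideal.IsPrime.mem_or_mem inferInstance h).elim hs hs', ?_⟩
          intro z hz
          rcases Finset.mem_insert.1 hz with rfl | hz
          · exact ⟨s • w, N.smul_mem _ hw, by rw [mul_smul, hsw, smul_comm]⟩
          · obtain ⟨w', hw', h'⟩ := h z hz
            exact ⟨s' • w', N.smul_mem _ hw', by rw [mul_comm, mul_smul, h', smul_comm]⟩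
      obtain ⟨s, hs, h⟩ := this S (by rw [← hS]; exact Submodule.subset_span)
      refine ⟨s, hs, ?_⟩
      intro z hz
      rw [← hS] at hz
      induction hz using Submodule.span_induction with
      | mem z hz => exact h z hz
      | zero => exact ⟨0, N.zero_mem, by simp⟩
      | add a b _ _ h1 h2 =>
        obtain ⟨w1, hw1, e1⟩ := h1
        obtain ⟨w2, hw2, e2⟩ := h2
        exact ⟨w1 + w2, N.add_mem hw1 hw2, by rw [smul_add, smul_add, e1, e2]⟩
      | smul c a _ h1 =>
        obtain ⟨w1, hw1, e1⟩ := h1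
        exact ⟨c • w1, N.smul_mem _ hw1, by rw [smul_comm, e1, smul_comm]⟩
    obtain ⟨s, hsm, hs⟩ := hs
    obtain ⟨P, hPm, hPd, hPc, hP0⟩ :=
      LinearMap.exists_monic_and_natDegree_eq_and_coeff_mem_pow_and_aeval_eq_zero R
        (LinearMap.lsmul R N s) (Ideal.span {x}) (by
          rintro _ ⟨z, rfl⟩
          obtain ⟨w, hw, e⟩ := hs z z.2
          have : (LinearMap.lsmul R N s) z = x • (⟨w, hw⟩ : N) := by
            apply Subtype.ext
            simpa using e
          rw [this]
          exact Submodule.smul_mem_smul (Ideal.mem_span_singleton_self x) trivial)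
    have hyN : y ∈ N := (hN y).2 fun a ha => (hy a).2 ha
    have h1 : P.eval s • y = 0 := by
      have h2 := congrArg (fun f : Module.End R N => ((f ⟨y, hyN⟩ : N) : M)) hP0
      have h3 : (LinearMap.lsmul R N s : Module.End R N) = algebraMap R (Module.End R N) s := by
        ext z; simp
      rw [h3, Polynomial.aeval_algebraMap_apply] at h2
      simpa using h2
    have h4 : P.eval s ∈ m := hpm ((hy _).1 h1)
    rw [Polynomial.eval_eq_sum_range, Finset.sum_range_succ, hPm.coeff_natDegree, one_mul] at h4
    have h5 : ∑ i ∈ Finset.range P.natDegree, P.coeff i * s ^ i ∈ m := by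
      refine Ideal.sum_mem _ fun i hi => Ideal.mul_mem_right _ _ ?_
      have h6 := hPc i
      have : P.natDegree - i ≠ 0 := by have := Finset.mem_range.1 hi; omega
      exact (Ideal.span_singleton_le_iff_mem _).2 hxm (Ideal.pow_le_self this h6)
    have h7 : s ^ P.natDegree ∈ m := (Ideal.add_mem_iff_right _ h5).1 h4
    exact hsm (Ideal.IsPrime.mem_of_pow_mem inferInstance _ h7)
  obtain ⟨z, hzN, hz⟩ := key
  let zb : QuotSMulTop x M := Submodule.Quotient.mk z
  have hJm : (⊥ : Submodule R (QuotSMulTop x M)).colon {zb} ≤ m := by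
    intro r hr
    rw [Submodule.mem_colon_singleton, Submodule.mem_bot] at hr
    have : r • z ∈ x • (⊤ : Submodule R M) := by
      rwa [← Submodule.Quotient.mk_smul, Submodule.Quotient.mk_eq_zero] at hr
    obtain ⟨w, -, hw⟩ := (Submodule.mem_smul_pointwise_iff_exists _ _ _).1 this
    refine hz r ⟨w, (hN w).2 fun a ha => ?_, hw.symm⟩
    apply hx
    show x • a • w = x • (0 : M)
    rw [smul_comm, hw, smul_comm, (hN z).1 hzN a ha, smul_zero, smul_zero]
  obtain ⟨q, hq, hqm⟩ := Ideal.exists_minimalPrimes_le hJm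
  obtain ⟨y', hy'⟩ := Submodule.exists_eq_colon_of_mem_minimalPrimes hq
  refine ⟨q, hq.isPrime, hqm, ?_, y', ?_⟩
  · refine lt_of_le_of_ne (le_trans ?_ hq.le) ?_
    · intro a ha
      rw [Submodule.mem_colon_singleton, Submodule.mem_bot]
      show a • zb = 0
      rw [← Submodule.Quotient.mk_smul, (hN z).1 hzN a ha, Submodule.Quotient.mk_zero]
    · rintro rfl
      apply hxp
      apply hq.le
      rw [Submodule.mem_colon_singleton, Submodule.mem_bot]
      show x • zb = 0
      rw [← Submodule.Quotient.mk_smul, Submodule.Quotient.mk_eq_zero]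
      exact Submodule.smul_mem_pointwise_smul _ _ _ trivial
  · intro r
    rw [hy', Submodule.mem_colon_singleton, Submodule.mem_bot]

lemma ass_chain {R : Type u} [CommRing R] [IsNoetherianRing R] (m : Ideal R) [m.IsPrime]
    (l : List R) (hl : ∀ f ∈ l, f ∈ m) : ∀ (p : Ideal R) (_ : p.IsPrime)
    (_ : p ≤ m) (M : Type u) [AddCommGroup M] [Module R M] [Module.Finite R M]
    (y : M) (_ : ∀ r : R, r • y = 0 ↔ r ∈ p) (_ : IsWeaklyRegular M l),
    p.height + l.length ≤ m.height := by
  induction l with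
  | nil =>
    intro p _ hpm M _ _ _ y hy hreg
    simpa using Ideal.height_mono hpm
  | cons x l ih =>
    intro p hp hpm M _ _ _ y hy hreg
    rw [isWeaklyRegular_cons_iff] at hreg
    obtain ⟨q, hq, hqm, hpq, y', hy'⟩ := ass_step m p hpm y hy x (hl x (by simp)) hreg.1
    have h1 := ih (fun f hf => hl f (by simp [hf])) q hq hqm (QuotSMulTop x M) y' hy' hreg.2
    have h2 : p.height + 1 ≤ q.height :=
      Order.add_one_le_of_lt (Ideal.height_strict_mono_of_isPrime hpq)
    calc p.height + ((x :: l).length : ℕ) = (p.height + 1) + l.length := by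
          rw [List.length_cons]; push_cast; ring
      _ ≤ q.height + l.length := by gcongr
      _ ≤ _ := h1

/-- depth at least `r`. -/
def DGE {R : Type u} [CommRing R] (m : Ideal R) (r : ℕ) (I : Ideal R) : Prop :=
  ∃ l : List R, l.length = r ∧ (∀ f ∈ l, f ∈ m) ∧ IsRegular (R ⧸ I) l

lemma smul_lt_aux {R : Type u} [CommRing R] (m : Ideal R) (hm : m ≠ ⊤) (I : Ideal R) (hI : I ≤ m) :
    m • (⊤ : Submodule R (R ⧸ I)) < ⊤ := by
  rw [lt_top_iff_ne_top]
  intro h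
  apply hm
  rw [Ideal.eq_top_iff_one]
  have h1 : (Submodule.Quotient.mk (1 : R) : R ⧸ I) ∈ m • (⊤ : Submodule R (R ⧸ I)) := by
    rw [h]; trivial
  have h2 : m • (⊤ : Submodule R (R ⧸ I)) ≤ Submodule.map (Submodule.mkQ I) m := by
    rw [Submodule.smul_le]
    rintro r hr z -
    obtain ⟨z, rfl⟩ := Submodule.mkQ_surjective _ z
    refine ⟨r * z, m.mul_mem_right _ hr, ?_⟩
    rw [← smul_eq_mul, map_smul]
  obtain ⟨a, ha, e⟩ := h2 h1
  have : a - 1 ∈ I := (Submodule.Quotient.eq I).1 e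
  have := m.sub_mem ha (hI this)
  simpa using this

lemma DGE_of_ses {R : Type u} [CommRing R] [IsNoetherianRing R] (m : Ideal R) (hm : m ≠ ⊤)
    (r : ℕ) (I J L : Ideal R) (x : R) (hJ : ∀ f, f * x ∈ I ↔ f ∈ J) (hL : L = I ⊔ Ideal.span {x})
    (hJm : J ≤ m) (hLm : L ≤ m) (h1 : DGE m r J) (h2 : DGE m r L) : DGE m r I := by
  have hIL : I ≤ L := hL ▸ le_sup_left
  have hIJ : J ≤ Submodule.comap (LinearMap.mulRight R x) I := fun f hf => (hJ f).2 hf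
  let f : (R ⧸ J) →ₗ[R] (R ⧸ I) := Submodule.mapQ J I (LinearMap.mulRight R x) hIJ
  let g : (R ⧸ I) →ₗ[R] (R ⧸ L) := Submodule.factor hIL
  have hex : Function.Exact f g := by
    intro z
    obtain ⟨z, rfl⟩ := Submodule.mkQ_surjective _ z
    constructor
    · intro h
      have h3 : z ∈ L := (Submodule.Quotient.mk_eq_zero L).1 h
      rw [hL] at h3
      obtain ⟨i, hi, j, hj, rfl⟩ := Submodule.mem_sup.1 h3
      obtain ⟨a, rfl⟩ := Ideal.mem_span_singleton'.1 hj
      refine ⟨Submodule.Quotient.mk a, ?_⟩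
      refine (Submodule.Quotient.eq I).2 ?_
      simpa using hi
    · rintro ⟨w, hw⟩
      obtain ⟨w, rfl⟩ := Submodule.mkQ_surjective _ w
      rw [← hw]
      refine (Submodule.Quotient.mk_eq_zero L).2 ?_
      rw [hL]
      exact Ideal.mem_sup_right (Ideal.mem_span_singleton'.2 ⟨w, rfl⟩)
  have hfi : Function.Injective f := by
    rw [injective_iff_map_eq_zero]
    intro z hz
    obtain ⟨z, rfl⟩ := Submodule.mkQ_surjective _ z
    exact (Submodule.Quotient.mk_eq_zero J).2 ((hJ z).1 ((Submodule.Quotient.mk_eq_zero I).1 hz))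
  have hgs : Function.Surjective g := Submodule.factor_surjective hIL
  let S := ModuleCat.shortComplexOfCompEqZero f g hex.linearMap_comp_eq_zero
  have hS : S.ShortExact :=
    { exact := ModuleCat.shortComplex_exact _ hex
      mono_f := (ModuleCat.mono_iff_injective _).2 hfi
      epi_g := (ModuleCat.epi_iff_surjective _).2 hgs }
  have e1 := ((ModuleCat.exists_isRegular_tfae m r (ModuleCat.of R (R ⧸ J))
    (smul_lt_aux m hm J hJm)).out 3 1).1 h1
  have e2 := ((ModuleCat.exists_isRegular_tfae m r (ModuleCat.of R (R ⧸ L))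
    (smul_lt_aux m hm L hLm)).out 3 1).1 h2
  refine ((ModuleCat.exists_isRegular_tfae m r (ModuleCat.of R (R ⧸ I))
    (smul_lt_aux m hm I (hIL.trans hLm))).out 3 1).2 ?_
  intro i hi
  have z1 := AddCommGrpCat.isZero_of_iff_subsingleton.mpr (e1 i hi)
  have z2 := AddCommGrpCat.isZero_of_iff_subsingleton.mpr (e2 i hi)
  exact AddCommGrpCat.subsingleton_of_isZero <| ShortComplex.Exact.isZero_of_both_zeros
    (Ext.covariant_sequence_exact₂' _ hS i) (z1.eq_zero_of_src _) (z2.eq_zero_of_tgt _)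

lemma DGE_succ {R : Type u} [CommRing R] (m : Ideal R)
    (r : ℕ) (I L : Ideal R) (x : R) (hJ : ∀ f, f * x ∈ I ↔ f ∈ I) (hL : L = I ⊔ Ideal.span {x})
    (hxm : x ∈ m) (h2 : DGE m r L) : DGE m (r + 1) I := by
  obtain ⟨l, hl, hlm, hreg⟩ := h2
  have hIL : I ≤ L := hL ▸ le_sup_left
  refine ⟨x :: l, by simp [hl], by simpa using ⟨hxm, hlm⟩, ?_⟩
  rw [isRegular_cons_iff]
  constructor
  · rw [isSMulRegular_iff_right_eq_zero_of_smul]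
    intro z hz
    obtain ⟨z, rfl⟩ := Submodule.mkQ_surjective _ z
    rw [← map_smul] at hz
    refine (Submodule.Quotient.mk_eq_zero I).2 ((hJ z).1 ?_)
    rw [mul_comm]
    exact (Submodule.Quotient.mk_eq_zero I).1 hz
  · let g : (R ⧸ I) →ₗ[R] (R ⧸ L) := Submodule.factor hIL
    have hgs : Function.Surjective g := Submodule.factor_surjective hIL
    have hk : x • (⊤ : Submodule R (R ⧸ I)) = LinearMap.ker g := by
      ext z
      obtain ⟨z, rfl⟩ := Submodule.mkQ_surjective _ z
      rw [LinearMap.mem_ker, Submodule.mem_smul_pointwise_iff_exists]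
      constructor
      · rintro ⟨w, -, hw⟩
        obtain ⟨w, rfl⟩ := Submodule.mkQ_surjective _ w
        rw [← hw, ← map_smul]
        refine (Submodule.Quotient.mk_eq_zero L).2 ?_
        rw [hL]
        exact Ideal.mem_sup_right (Ideal.mem_span_singleton'.2 ⟨w, mul_comm _ _⟩)
      · intro h
        have h3 : z ∈ L := (Submodule.Quotient.mk_eq_zero L).1 h
        rw [hL] at h3
        obtain ⟨i, hi, j, hj, rfl⟩ := Submodule.mem_sup.1 h3
        obtain ⟨a, rfl⟩ := Ideal.mem_span_singleton'.1 hj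
        refine ⟨Submodule.Quotient.mk a, trivial, ?_⟩
        rw [← Submodule.Quotient.mk_smul]
        refine (Submodule.Quotient.eq I).2 ?_
        rw [smul_eq_mul, mul_comm x a]
        simpa using hi
    exact (((Submodule.quotEquivOfEq _ _ hk).trans
      (g.quotKerEquivOfSurjective hgs)).isRegular_congr l).2 hreg

section SR

variable {K : Type u} [Field K] {n : ℕ}

/-- Stanley-Reisner type ideal. -/
noncomputable def srI (K : Type u) [Field K] {n : ℕ} (D : Set (Finset (Fin n))) :
    Ideal (MvPolynomial (Fin n) K) :=
  Ideal.span ((fun d => monomial d (1 : K)) '' {d | d.support ∉ D})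

lemma mem_srI {D : Set (Finset (Fin n))} (hD : IsLowerSet D) (f : MvPolynomial (Fin n) K) :
    f ∈ srI K D ↔ ∀ d, d.support ∈ D → coeff d f = 0 := by
  rw [srI, mem_ideal_span_monomial_image]
  constructor
  · intro h d hd
    by_contra hc
    obtain ⟨e, he, hed⟩ := h d (mem_support_iff.2 hc)
    exact he (hD (Finsupp.support_mono hed) hd)
  · intro h d hd
    exact ⟨d, fun hc => mem_support_iff.1 hd (h d hc), le_rfl⟩

lemma prod_X_eq (A : Finset (Fin n)) :
    (∏ i ∈ A, X i : MvPolynomial (Fin n) K) = monomial (∑ i ∈ A, Finsupp.single i 1) 1 := by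
  rw [monomial_sum_one]; rfl

lemma sum_single_apply (A : Finset (Fin n)) (j : Fin n) :
    (∑ i ∈ A, Finsupp.single i 1 : Fin n →₀ ℕ) j = if j ∈ A then 1 else 0 := by
  rw [Finsupp.finsetSum_apply]
  simp [Finsupp.single_apply]

lemma supp_sum_single (A : Finset (Fin n)) :
    (∑ i ∈ A, Finsupp.single i 1 : Fin n →₀ ℕ).support = A := by
  ext j
  rw [Finsupp.mem_support_iff, sum_single_apply]
  simp

lemma mul_mem_srI {D : Set (Finset (Fin n))} (hD : IsLowerSet D) (A : Finset (Fin n))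
    {D' : Set (Finset (Fin n))} (hD' : ∀ F, F ∈ D' ↔ F ∪ A ∈ D)
    (f : MvPolynomial (Fin n) K) :
    f * (∏ i ∈ A, X i) ∈ srI K D ↔ f ∈ srI K D' := by
  have hl : IsLowerSet D' := fun a b hab ha =>
    (hD' b).2 (hD (Finset.union_subset_union_left hab) ((hD' a).1 ha))
  rw [mem_srI hD, mem_srI hl, prod_X_eq]
  have hs : ∀ d : Fin n →₀ ℕ, (d + ∑ i ∈ A, Finsupp.single i 1).support = d.support ∪ A := by
    intro d
    ext j
    rw [Finset.mem_union, Finsupp.mem_support_iff, Finsupp.add_apply, sum_single_apply,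
      Finsupp.mem_support_iff]
    split_ifs with h <;> simp [h]
  constructor
  · intro h d hd
    have := h (d + ∑ i ∈ A, Finsupp.single i 1) (by rw [hs]; exact (hD' _).1 hd)
    rwa [coeff_mul_monomial, mul_one] at this
  · intro h d hd
    rw [coeff_mul_monomial']
    split_ifs with hle
    · rw [mul_one]
      apply h
      rw [hD', ← hs, tsub_add_cancel_of_le hle]
      exact hd
    · rfl

lemma srI_del {D : Set (Finset (Fin n))} (v : Fin n)
    {D' : Set (Finset (Fin n))} (hD' : ∀ F, F ∈ D' ↔ F ∈ D ∧ v ∉ F) :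
    srI K D' = srI K D ⊔ Ideal.span {(X v : MvPolynomial (Fin n) K)} := by
  apply le_antisymm
  · refine Ideal.span_le.2 ?_
    rintro _ ⟨d, hd, rfl⟩
    have hd : d.support ∉ D' := hd
    rw [hD', not_and_or] at hd
    rcases hd with hd | hd
    · exact Ideal.mem_sup_left (Ideal.subset_span ⟨d, hd, rfl⟩)
    · refine Ideal.mem_sup_right (Ideal.mem_span_singleton.2 ?_)
      rw [X_dvd_monomial]
      right
      simpa using hd
  · refine sup_le (Ideal.span_mono ?_) ?_
    · refine Set.image_mono ?_
      intro d hd hc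
      exact hd ((hD' _).1 hc).1
    · rw [Ideal.span_singleton_le_iff_mem]
      refine Ideal.subset_span ⟨Finsupp.single v 1, ?_, rfl⟩
      show _ ∉ D'
      rw [hD']
      rintro ⟨-, h⟩
      exact h (by simp)

lemma srI_anti {D D' : Set (Finset (Fin n))} (h : D ⊆ D') : srI K D' ≤ srI K D :=
  Ideal.span_mono (Set.image_mono fun _ hd hc => hd (h hc))

lemma lower_Iic (F : Finset (Fin n)) : IsLowerSet {A | A ⊆ F} :=
  fun _ _ hab ha => hab.trans ha

instance prime_srI (F : Finset (Fin n)) : (srI K {A | A ⊆ F}).IsPrime := by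
  classical
  let φ : MvPolynomial (Fin n) K →ₐ[K] MvPolynomial (Fin n) K :=
    aeval (fun i => if i ∈ F then X i else 0)
  have h : srI K {A | A ⊆ F} = RingHom.ker φ := by
    apply le_antisymm
    · refine Ideal.span_le.2 ?_
      rintro _ ⟨d, hd, rfl⟩
      have hd : ¬ d.support ⊆ F := hd
      obtain ⟨j, hj, hjF⟩ := Finset.not_subset.1 hd
      show φ _ = 0
      obtain ⟨c, hc⟩ : (X j : MvPolynomial (Fin n) K) ∣ monomial d 1 := by
        rw [X_dvd_monomial]; right; simpa using hj
      beta_reduce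
      rw [hc, map_mul]
      simp [φ, hjF]
    · intro f hf
      have h1 : (Ideal.Quotient.mkₐ K (srI K {A | A ⊆ F})).comp φ =
          Ideal.Quotient.mkₐ K (srI K {A | A ⊆ F}) := by
        apply MvPolynomial.algHom_ext
        intro i
        by_cases hi : i ∈ F
        · simp [φ, hi]
        · have : (X i : MvPolynomial (Fin n) K) ∈ srI K {A | A ⊆ F} :=
            Ideal.subset_span ⟨Finsupp.single i 1, by
              show ¬ _ ⊆ F
              intro hc
              exact hi (hc (by simp)), rfl⟩
          have := Ideal.Quotient.eq_zero_iff_mem.2 this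
          simp [φ, hi, this]
      have h2 := congrArg (fun g => g f) h1
      have hf : φ f = 0 := hf
      simp only [AlgHom.comp_apply, hf, map_zero] at h2
      exact Ideal.Quotient.eq_zero_iff_mem.1 h2.symm
  rw [h]
  exact RingHom.ker_isPrime _

lemma maxI_eq : Ideal.span (Set.range (X : Fin n → MvPolynomial (Fin n) K)) =
    srI K {A | A ⊆ (∅ : Finset (Fin n))} := by
  apply le_antisymm
  · refine Ideal.span_le.2 ?_
    rintro _ ⟨i, rfl⟩
    refine Ideal.subset_span ⟨Finsupp.single i 1, ?_, rfl⟩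
    show ¬ (_ : Finset (Fin n)) ⊆ _
    intro hc
    simpa using hc (show i ∈ (Finsupp.single i 1 : Fin n →₀ ℕ).support by simp)
  · refine Ideal.span_le.2 ?_
    rintro _ ⟨d, hd, rfl⟩
    have hd : ¬ d.support ⊆ ∅ := hd
    obtain ⟨j, hj, -⟩ := Finset.not_subset.1 hd
    have : (X j : MvPolynomial (Fin n) K) ∣ monomial d 1 := by
      rw [X_dvd_monomial]; right; simpa using hj
    exact Ideal.mem_of_dvd _ this (Ideal.subset_span ⟨j, rfl⟩)

lemma srI_le_max {D : Set (Finset (Fin n))} (h : ∅ ∈ D) :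
    srI K D ≤ srI K {A | A ⊆ (∅ : Finset (Fin n))} :=
  srI_anti (by
    intro A hA
    have : A ⊆ ∅ := hA
    rw [Finset.subset_empty.1 this]; exact h)

lemma X_mem_max (v : Fin n) : (X v : MvPolynomial (Fin n) K) ∈
    srI K {A | A ⊆ (∅ : Finset (Fin n))} := by
  rw [← maxI_eq]; exact Ideal.subset_span ⟨v, rfl⟩

lemma simplex_depth (r : ℕ) : ∀ (F : Finset (Fin n)), r ≤ F.card →
    DGE (srI K {A | A ⊆ (∅ : Finset (Fin n))}) r (srI K {A | A ⊆ F}) := by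
  induction r with
  | zero =>
    intro F _
    have : Nontrivial (MvPolynomial (Fin n) K ⧸ srI K {A | A ⊆ F}) :=
      Ideal.Quotient.nontrivial_iff.2 Ideal.IsPrime.ne_top'
    exact ⟨[], rfl, by simp, IsRegular.nil _ _⟩
  | succ r ih =>
    intro F hF
    obtain ⟨v, hv⟩ : F.Nonempty := Finset.card_pos.1 (by omega)
    refine DGE_succ _ r _ (srI K {A | A ⊆ F.erase v}) (X v) ?_ ?_ (X_mem_max v)
      (ih _ (by rw [Finset.card_erase_of_mem hv]; omega))
    · intro f
      have := mul_mem_srI (K := K) (lower_Iic F) {v} (D' := {A | A ⊆ F}) (by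
        intro A
        show A ⊆ F ↔ A ∪ {v} ⊆ F
        rw [Finset.union_subset_iff, Finset.singleton_subset_iff]
        exact ⟨fun h => ⟨h, hv⟩, fun h => h.1⟩) f
      simpa using this
    · refine srI_del v ?_
      intro A
      exact Finset.subset_erase

lemma main_depth (r : ℕ) (U : Finset (Fin n)) : ∀ (T : Finset (Fin n))
    (D : Set (Finset (Fin n))), IsLowerSet D → ∅ ∈ D → (∀ F ∈ D, F ⊆ T ∪ U) →
    (∀ F ∈ D, F ∪ T ∈ D) → (∀ A, A ⊆ T ∪ U → (A ∪ T).card ≤ r → A ∈ D) →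
    r ≤ (T ∪ U).card → DGE (srI K {A | A ⊆ (∅ : Finset (Fin n))}) r (srI K D) := by
  induction U using Finset.induction_on with
  | empty =>
    intro T D hD h0 hW hcone hsk hr
    have : D = {A | A ⊆ T} := by
      ext A
      constructor
      · intro hA; simpa using hW A hA
      · intro hA
        have h1 := hcone _ h0
        rw [Finset.empty_union] at h1
        exact hD hA h1
    rw [this]
    exact simplex_depth r T (by simpa using hr)
  | insert v U hvU ih =>
    intro T D hD h0 hW hcone hsk hr
    by_cases hvT : v ∈ T
    · have e : T ∪ insert v U = T ∪ U := by
        ext a; simp only [Finset.mem_union, Finset.mem_insert]; grind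
      rw [e] at hW hsk hr
      exact ih T D hD h0 hW hcone hsk hr
    by_cases hc : r ≤ (T ∪ U).card
    · by_cases hv : {v} ∈ D
      · have hv' : v ∉ T ∪ U := by simp [hvT, hvU]
        let st : Set (Finset (Fin n)) := {F | F ∪ {v} ∈ D}
        let dl : Set (Finset (Fin n)) := {F | F ∈ D ∧ v ∉ F}
        refine DGE_of_ses _ Ideal.IsPrime.ne_top' r _ (srI K st) (srI K dl) (X v) ?_
          (srI_del v fun F => Iff.rfl) (srI_le_max ?_) (srI_le_max ?_) ?_ ?_
        · intro f
          simpa using mul_mem_srI (K := K) hD {v} (D' := st) (fun F => Iff.rfl) f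
        · show ∅ ∪ {v} ∈ D
          simpa using hv
        · exact ⟨h0, by simp⟩
        · have e : insert v T ∪ U = T ∪ insert v U := by
            ext a; simp only [Finset.mem_union, Finset.mem_insert]; grind
          refine ih (insert v T) st ?_ ?_ ?_ ?_ ?_ ?_
          · intro a b hab ha
            exact hD (Finset.union_subset_union_left hab) ha
          · show ∅ ∪ {v} ∈ D
            simpa using hv
          · intro F hF
            rw [e]
            exact Finset.subset_union_left.trans (hW _ hF)
          · intro F hF
            have := hcone _ hF
            show F ∪ insert v T ∪ {v} ∈ D
            convert this using 1
            ext a; simp only [Finset.mem_union, Finset.mem_insert, Finset.mem_singleton]; grind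
          · intro A hA hcard
            refine hsk _ ?_ ?_
            · rw [← e]
              exact Finset.union_subset hA (by simp)
            · convert hcard using 2
              ext a; simp only [Finset.mem_union, Finset.mem_insert, Finset.mem_singleton]; grind
          · rw [e]; exact hr
        · refine ih T dl ?_ ?_ ?_ ?_ ?_ hc
          · intro a b hab ha
            exact ⟨hD hab ha.1, fun h => ha.2 (hab h)⟩
          · exact ⟨h0, by simp⟩
          · intro F hF a ha
            have h1 := hW F hF.1 ha
            have h2 : a ≠ v := fun h => hF.2 (h ▸ ha)
            simp only [Finset.mem_union, Finset.mem_insert] at h1 ⊢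
            grind
          · intro F hF
            refine ⟨hcone F hF.1, ?_⟩
            rw [Finset.mem_union, not_or]
            exact ⟨hF.2, hvT⟩
          · intro A hA hcard
            refine ⟨hsk A (hA.trans (Finset.union_subset_union_right (Finset.subset_insert _ _)))
              hcard, fun h => hv' (hA h)⟩
      · refine ih T D hD h0 ?_ hcone ?_ hc
        · intro F hF a ha
          have h1 := hW F hF ha
          have h2 : a ≠ v := fun h => hv (hD (by simpa [← h] using ha) hF)
          simp only [Finset.mem_union, Finset.mem_insert] at h1 ⊢
          grind
        · intro A hA hcard
          exact hsk A (hA.trans (Finset.union_subset_union_right (Finset.subset_insert _ _))) hcard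
    · have hle : (T ∪ insert v U).card ≤ r := by
        rw [Finset.union_insert]
        have := Finset.card_insert_le v (T ∪ U)
        omega
      have : D = {A | A ⊆ T ∪ insert v U} := by
        ext A
        constructor
        · intro hA; exact hW A hA
        · intro hA
          refine hsk A hA (le_trans (Finset.card_le_card ?_) hle)
          exact Finset.union_subset hA Finset.subset_union_left
      rw [this]
      exact simplex_depth r _ hr

lemma height_srI (F : Finset (Fin n)) :
    ((Finset.univ \ F).card : ℕ∞) ≤ (srI K {A | A ⊆ F}).height := by
  generalize hc : (Finset.univ \ F).card = c
  induction c generalizing F with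
  | zero => simp
  | succ c ih =>
    obtain ⟨v, hv⟩ : (Finset.univ \ F).Nonempty := Finset.card_pos.1 (by omega)
    have hvF : v ∉ F := by simpa using hv
    have h1 := ih (insert v F) (by
      rw [Finset.sdiff_insert, Finset.card_erase_of_mem hv]; omega)
    have h2 : srI K {A | A ⊆ insert v F} < srI K {A | A ⊆ F} := by
      refine lt_of_le_of_ne (srI_anti fun A hA => ?_) ?_
      · exact Finset.Subset.trans hA (Finset.subset_insert _ _)
      · intro h
        have h3 : (X v : MvPolynomial (Fin n) K) ∈ srI K {A | A ⊆ F} := by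
          refine Ideal.subset_span ⟨Finsupp.single v 1, ?_, rfl⟩
          show ¬ _ ⊆ F
          intro hc
          exact hvF (hc (by simp))
        rw [← h, mem_srI (lower_Iic _)] at h3
        have := h3 (Finsupp.single v 1) (by
          show (_ : Finset (Fin n)) ⊆ insert v F
          intro a ha
          have := Finsupp.support_single_subset ha
          simp_all)
        simp at this
    have h4 := Order.add_one_le_of_lt (Ideal.height_strict_mono_of_isPrime h2)
    calc ((c + 1 : ℕ) : ℕ∞) = (c : ℕ∞) + 1 := by push_cast; rfl
      _ ≤ _ := by gcongr
      _ ≤ _ := h4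

lemma upper (D : Set (Finset (Fin n))) (hD : IsLowerSet D) (C : Finset (Fin n)) (hC : C ∈ D)
    (hmax : ∀ F ∈ D, C ⊆ F → F = C) (l : List (MvPolynomial (Fin n) K))
    (hl : ∀ f ∈ l, f ∈ srI K {A | A ⊆ (∅ : Finset (Fin n))})
    (hreg : IsWeaklyRegular (MvPolynomial (Fin n) K ⧸ srI K D) l) : l.length ≤ C.card := by
  have h1 := ass_chain (srI K {A | A ⊆ (∅ : Finset (Fin n))}) l hl (srI K {A | A ⊆ C})
    inferInstance (srI_anti fun A hA => Finset.Subset.trans hA (Finset.empty_subset _))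
    (MvPolynomial (Fin n) K ⧸ srI K D) (Submodule.Quotient.mk (∏ i ∈ C, X i)) (by
      intro r
      rw [← Submodule.Quotient.mk_smul, Submodule.Quotient.mk_eq_zero, smul_eq_mul]
      refine mul_mem_srI hD C ?_ r
      intro F
      constructor
      · intro hF
        have hF : F ⊆ C := hF
        rwa [Finset.union_eq_right.2 hF]
      · intro hF
        have := hmax _ hF Finset.subset_union_right
        exact Finset.union_eq_right.1 this) hreg
  have h2 := height_srI (K := K) C
  have h3 : (srI K {A | A ⊆ (∅ : Finset (Fin n))}).height ≤ (n : ℕ∞) := by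
    have := Ideal.height_le_ringKrullDim_of_isPrime (I := srI K {A | A ⊆ (∅ : Finset (Fin n))})
    rw [MvPolynomial.ringKrullDim_of_isNoetherianRing, ringKrullDim_eq_zero_of_field] at this
    simp only [Nat.card_eq_fintype_card, Fintype.card_fin, zero_add] at this
    exact_mod_cast this
  have h4 : ((Finset.univ \ C).card : ℕ∞) + l.length ≤ n :=
    le_trans (by gcongr) (h1.trans h3)
  have h5 : (Finset.univ \ C).card + l.length ≤ n := by exact_mod_cast h4
  rw [Finset.card_univ_sdiff, Fintype.card_fin] at h5
  have := Finset.card_le_univ C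
  rw [Fintype.card_fin] at this
  omega

end SR

section Match

variable {n : ℕ}

lemma card_mVerts (G : SimpleGraph (Fin n)) (M : Finset (Sym2 (Fin n))) (hM : IsMatching G M) :
    (mVerts M).card = 2 * M.card := by
  classical
  have h1 : mVerts M = M.biUnion Sym2.toFinset := by
    ext v; simp [mVerts]
  rw [h1, Finset.card_biUnion]
  · rw [Finset.sum_congr rfl (g := fun _ => 2), Finset.sum_const, smul_eq_mul, mul_comm]
    intro e he
    exact Sym2.card_toFinset_of_not_isDiag e (G.not_isDiag_of_mem_edgeSet (hM.1 he))
  · intro e he f hf hef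
    show Disjoint e.toFinset f.toFinset
    rw [Finset.disjoint_left]
    intro v hv hv'
    rw [Sym2.mem_toFinset] at hv hv'
    exact hM.2 he hf hef v hv hv'

lemma matching_insert (G : SimpleGraph (Fin n)) (M : Finset (Sym2 (Fin n))) (j : ℕ)
    (hM : IsKMatching G M j) (D : Finset (Fin n)) (hD : mVerts M ⊆ D) (a b : Fin n)
    (hab : G.Adj a b) (ha : a ∉ D) (hb : b ∉ D) :
    ∃ M', IsKMatching G M' (j + 1) ∧ mVerts M' ⊆ insert a (insert b D) := by
  have hmem : ∀ e ∈ M, ∀ v ∈ e, v ∈ D := fun e he v hv => hD (by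
    simp only [mVerts, Finset.mem_filter, Finset.mem_univ, true_and]; exact ⟨e, he, hv⟩)
  have hnot : s(a, b) ∉ M := fun h => ha (hmem _ h a (by simp))
  refine ⟨insert s(a, b) M, ⟨⟨?_, ?_⟩, ?_⟩, ?_⟩
  · intro e he
    rw [Finset.coe_insert, Set.mem_insert_iff] at he
    rcases he with rfl | he
    · exact hab
    · exact hM.1.1 he
  · intro e he f hf hef v hve hvf
    rw [Finset.coe_insert, Set.mem_insert_iff] at he hf
    rcases he with rfl | he <;> rcases hf with rfl | hf
    · exact hef rfl
    · have := hmem f hf v hvf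
      rcases Sym2.mem_iff.1 hve with rfl | rfl
      · exact ha this
      · exact hb this
    · have := hmem e he v hve
      rcases Sym2.mem_iff.1 hvf with rfl | rfl
      · exact ha this
      · exact hb this
    · exact hM.1.2 he hf hef v hve hvf
  · rw [Finset.card_insert_of_notMem hnot, hM.2]
  · intro v hv
    simp only [mVerts, Finset.mem_filter, Finset.mem_univ, true_and] at hv
    obtain ⟨e, he, hve⟩ := hv
    rcases Finset.mem_insert.1 he with rfl | he
    · rcases Sym2.mem_iff.1 hve with rfl | rfl <;> simp
    · simp [hmem e he v hve]

lemma clique_matching (G : SimpleGraph (Fin n)) (j : ℕ) : ∀ (D : Finset (Fin n)),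
    D.card = 2 * j → (∀ x ∈ D, ∀ y ∈ D, x ≠ y → G.Adj x y) →
    ∃ M, IsKMatching G M j ∧ mVerts M ⊆ D := by
  induction j with
  | zero =>
    intro D _ _
    refine ⟨∅, ⟨⟨by simp, by simp⟩, rfl⟩, ?_⟩
    intro v hv
    simp [mVerts] at hv
  | succ j ih =>
    intro D hc hcl
    obtain ⟨a, ha, b, hb, hab⟩ := Finset.one_lt_card.1 (show 1 < D.card by omega)
    have hb' : b ∈ D.erase a := Finset.mem_erase.2 ⟨hab.symm, hb⟩
    obtain ⟨M, hM, hMD⟩ := ih ((D.erase a).erase b) (by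
      rw [Finset.card_erase_of_mem hb', Finset.card_erase_of_mem ha]; omega) (by
      intro x hx y hy
      exact hcl x (Finset.mem_of_mem_erase (Finset.mem_of_mem_erase hx)) y
        (Finset.mem_of_mem_erase (Finset.mem_of_mem_erase hy)))
    obtain ⟨M', hM', h'⟩ := matching_insert G M j hM _ hMD a b (hcl a ha b hb hab)
      (by simp) (by simp)
    rw [Finset.insert_erase hb', Finset.insert_erase ha] at h'
    exact ⟨M', hM', h'⟩

/-- The complex of vertex sets without `k`-matching. -/
def cplx (G : SimpleGraph (Fin n)) (k : ℕ) : Set (Finset (Fin n)) :=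
  {F | ¬ ∃ M, IsKMatching G M k ∧ mVerts M ⊆ F}

lemma cplx_lower (G : SimpleGraph (Fin n)) (k : ℕ) : IsLowerSet (cplx G k) :=
  fun _ _ hab ha ⟨M, hM, h⟩ => ha ⟨M, hM, h.trans hab⟩

lemma matchPow_eq (K : Type u) [Field K] (G : SimpleGraph (Fin n)) (k : ℕ) :
    matchPow K G k = srI K (cplx G k) := by
  apply le_antisymm
  · refine Ideal.span_le.2 ?_
    rintro _ ⟨M, hM, rfl⟩
    rw [matchMon, prod_X_eq]
    refine Ideal.subset_span ⟨_, ?_, rfl⟩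
    show _ ∉ cplx G k
    rw [supp_sum_single]
    exact fun h => h ⟨M, hM, subset_rfl⟩
  · refine Ideal.span_le.2 ?_
    rintro _ ⟨d, hd, rfl⟩
    have hd : ¬ ¬ ∃ M, IsKMatching G M k ∧ mVerts M ⊆ d.support := hd
    obtain ⟨M, hM, hMd⟩ := not_not.1 hd
    have h1 : matchMon K M ∣ monomial d 1 := by
      rw [matchMon, prod_X_eq, monomial_one_dvd_monomial_one]
      intro j
      rw [sum_single_apply]
      split_ifs with h
      · have := Finsupp.mem_support_iff.1 (hMd h)
        omega
      · exact Nat.zero_le _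
    exact Ideal.mem_of_dvd _ h1 (Ideal.subset_span ⟨M, hM, rfl⟩)

end Match

end DomClique

/-- Let `G` be a graph on `[n]` and `2 ≤ k ≤ ν(G)`. If `G` has
a dominating clique `K_{2k−1}`, then `g_{I(G)}(k) = 0`, i.e.
`depth(S/I(G)^{[k]}) = 2k − 1`. -/
theorem min_depth_of_dominating_clique {K : Type*} [Field K] {n : ℕ}
    (G : SimpleGraph (Fin n)) (k : ℕ) (hk2 : 2 ≤ k) (hk : k ≤ matchNum G)
    (C : Finset (Fin n)) (hcard : C.card = 2 * k - 1)
    (hclique : ∀ x ∈ C, ∀ y ∈ C, x ≠ y → G.Adj x y)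
    (hdom : ∀ v : Fin n, v ∉ C → ∃ u ∈ C, G.Adj v u) :
    qdepth K (matchPow K G k) = 2 * k - 1 := by
  have hsk : ∀ A : Finset (Fin n), A.card ≤ 2 * k - 1 → A ∈ DomClique.cplx G k := by
    rintro A hA ⟨M, hM, hMA⟩
    have h1 := Finset.card_le_card hMA
    rw [DomClique.card_mVerts G M hM.1, hM.2] at h1
    omega
  have hmax : ∀ F ∈ DomClique.cplx G k, C ⊆ F → F = C := by
    intro F hF hCF
    by_contra hne
    obtain ⟨v, hvF, hvC⟩ := Finset.not_subset.1 (fun h => hne (Finset.Subset.antisymm h hCF))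
    obtain ⟨u, huC, hvu⟩ := hdom v hvC
    obtain ⟨M, hM, hMD⟩ := DomClique.clique_matching G (k - 1) (C.erase u)
      (by rw [Finset.card_erase_of_mem huC]; omega)
      (fun x hx y hy => hclique x (Finset.mem_of_mem_erase hx) y (Finset.mem_of_mem_erase hy))
    obtain ⟨M', hM', h'⟩ := DomClique.matching_insert G M (k - 1) hM _ hMD v u hvu
      (fun h => hvC (Finset.mem_of_mem_erase h)) (by simp)
    rw [Nat.sub_add_cancel (by omega)] at hM'
    rw [Finset.insert_erase huC] at h'
    exact hF ⟨M', hM', h'.trans (Finset.insert_subset hvF hCF)⟩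
  rw [qdepth, DomClique.matchPow_eq, DomClique.maxI_eq]
  have hub : ∀ m ∈ {m | ∃ l : List (MvPolynomial (Fin n) K), l.length = m ∧
      (∀ f ∈ l, f ∈ DomClique.srI K {A | A ⊆ (∅ : Finset (Fin n))}) ∧
      RingTheory.Sequence.IsRegular
        (MvPolynomial (Fin n) K ⧸ DomClique.srI K (DomClique.cplx G k)) l}, m ≤ 2 * k - 1 := by
    rintro m ⟨l, rfl, hl, hreg⟩
    rw [← hcard]
    exact DomClique.upper _ (DomClique.cplx_lower G k) C (hsk C hcard.le) hmax l hl
      hreg.toIsWeaklyRegular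
  refine le_antisymm (csSup_le' hub) (le_csSup ⟨_, hub⟩ ?_)
  refine DomClique.main_depth (2 * k - 1) Finset.univ ∅ _ (DomClique.cplx_lower G k)
    (hsk _ (by simp)) (fun F _ => by simp) (fun F hF => by simpa using hF) ?_ ?_
  · intro A _ hA
    exact hsk A (by simpa using hA)
  · rw [← hcard]
    exact Finset.card_le_card (by simp)
end

section
/- Let I ⊂ S = K[x_1,…,x_n] be a monomial ideal with linear quotients. Then the squarefree part of I (the ideal generated by the squarefree minimal generators of I) also has linear quotients. -/
open MvPolynomial

section Helpers

variable {K : Type*} [Field K] {σ : Type*}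

theorem aux_dvd_of_mem_span {B : Set (MvPolynomial σ K)} (hB : ∀ u ∈ B, IsMonomial K u)
    {f : MvPolynomial σ K} (hf : f ∈ Ideal.span B) {m : σ →₀ ℕ} (hm : m ∈ f.support) :
    ∃ d : σ →₀ ℕ, monomial d (1 : K) ∈ B ∧ d ≤ m := by
  have hE : B = (fun s => monomial s (1 : K)) '' {d | monomial d (1 : K) ∈ B} := by
    ext u
    constructor
    · intro hu
      obtain ⟨d, rfl⟩ := hB u hu
      exact ⟨d, hu, rfl⟩
    · rintro ⟨d, hd, rfl⟩
      exact hd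
  rw [hE, mem_ideal_span_monomial_image] at hf
  exact hf m hm

theorem aux_mem_colon {J : Ideal (MvPolynomial σ K)} {u f : MvPolynomial σ K} :
    f ∈ Submodule.colon J ((Ideal.span {u} : Ideal (MvPolynomial σ K)) : Set _) ↔ f * u ∈ J := by
  rw [Submodule.mem_colon]
  constructor
  · intro h
    exact h u (Ideal.subset_span rfl)
  · intro h s hs
    obtain ⟨c, rfl⟩ := Ideal.mem_span_singleton'.1 hs
    rw [smul_eq_mul, mul_left_comm]
    exact J.mul_mem_left c h

theorem aux_sqf_le {d : σ →₀ ℕ} (h : Squarefree (monomial d (1 : K))) (k : σ) : d k ≤ 1 := by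
  by_contra hk
  have hd : (X k * X k : MvPolynomial σ K) ∣ monomial d (1 : K) := by
    rw [X, monomial_mul, mul_one, monomial_one_dvd_monomial_one, ← Finsupp.single_add,
      Finsupp.single_le_iff]
    omega
  exact (X_prime (R := K) (i := k)).not_isUnit (h _ hd)

theorem aux_forward {B : Set (MvPolynomial σ K)} (hB : ∀ u ∈ B, IsMonomial K u)
    {u : σ →₀ ℕ} {A : Set σ}
    (hA : Submodule.colon (Ideal.span B)
      ((Ideal.span {monomial u (1 : K)} : Ideal (MvPolynomial σ K)) : Set _) =
        Ideal.span (X '' A)) {v : σ →₀ ℕ} (hv : monomial v (1 : K) ∈ B) :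
    ∃ k w, u k < v k ∧ monomial w (1 : K) ∈ B ∧ w ≤ Finsupp.single k 1 + u := by
  have h1 : monomial (v - u) (1 : K) ∈ Ideal.span (X '' A : Set (MvPolynomial σ K)) := by
    rw [← hA, aux_mem_colon, monomial_mul, mul_one]
    refine Ideal.mem_of_dvd _ ?_ (Ideal.subset_span hv)
    rw [monomial_one_dvd_monomial_one]
    intro k
    simp only [Finsupp.add_apply, Finsupp.tsub_apply]
    omega
  rw [mem_ideal_span_X_image] at h1
  obtain ⟨k, hk, hk'⟩ := h1 (v - u) (by classical simp [coeff_monomial])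
  have h2 : (X k : MvPolynomial σ K) ∈ Ideal.span (X '' A : Set (MvPolynomial σ K)) :=
    Ideal.subset_span ⟨k, hk, rfl⟩
  rw [← hA, aux_mem_colon, X, monomial_mul, mul_one] at h2
  obtain ⟨w, hw, hle⟩ := aux_dvd_of_mem_span hB h2 (m := Finsupp.single k 1 + u)
    (by classical simp [coeff_monomial])
  refine ⟨k, w, ?_, hw, hle⟩
  simp only [Finsupp.tsub_apply] at hk'
  omega

theorem aux_backward {B : Set (MvPolynomial σ K)} (hB : ∀ u ∈ B, IsMonomial K u)
    {u : σ →₀ ℕ}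
    (h : ∀ v : σ →₀ ℕ, monomial v (1 : K) ∈ B →
      ∃ k w, u k < v k ∧ monomial w (1 : K) ∈ B ∧ w ≤ Finsupp.single k 1 + u) :
    ∃ A : Set σ, Submodule.colon (Ideal.span B)
      ((Ideal.span {monomial u (1 : K)} : Ideal (MvPolynomial σ K)) : Set _) =
        Ideal.span (X '' A) := by
  refine ⟨{k | (X k : MvPolynomial σ K) * monomial u 1 ∈ Ideal.span B}, le_antisymm ?_ ?_⟩
  · intro f hf
    rw [aux_mem_colon] at hf
    rw [mem_ideal_span_X_image]
    intro m hm
    have hmu : m + u ∈ (f * monomial u (1 : K)).support := by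
      rw [mem_support_iff, coeff_mul_monomial, mul_one]
      exact mem_support_iff.1 hm
    obtain ⟨v, hv, hle⟩ := aux_dvd_of_mem_span hB hf hmu
    obtain ⟨k, w, hk, hw, hwle⟩ := h v hv
    refine ⟨k, ?_, ?_⟩
    · refine Ideal.mem_of_dvd _ ?_ (Ideal.subset_span hw)
      rw [X, monomial_mul, mul_one, monomial_one_dvd_monomial_one]
      exact hwle
    · have := hle k
      simp only [Finsupp.add_apply] at this
      omega
  · rw [Ideal.span_le]
    rintro _ ⟨k, hk, rfl⟩
    exact aux_mem_colon.2 hk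

theorem aux_minGens [Fintype σ] [DecidableEq σ] (I : Ideal (MvPolynomial σ K))
    (u : MvPolynomial σ K) :
    u ∈ minGens K (sqfPart K I) ↔ u ∈ minGens K I ∧ Squarefree u := by
  have hle : sqfPart K I ≤ I := by
    refine Ideal.span_le.2 ?_
    rintro v ⟨hv, -⟩
    exact hv.2.1
  constructor
  · rintro ⟨⟨d, rfl⟩, hu, hmin⟩
    obtain ⟨e, he, hed⟩ := aux_dvd_of_mem_span (K := K) (fun v hv => hv.1.1) hu (m := d)
      (by classical simp [coeff_monomial])
    rw [← hmin _ ⟨e, rfl⟩ (Ideal.subset_span he) (monomial_one_dvd_monomial_one.2 hed)]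
    exact he
  · rintro ⟨hu, hs⟩
    exact ⟨hu.1, Ideal.subset_span ⟨hu, hs⟩, fun v hv hvI hd => hu.2.2 v hv (hle hvI) hd⟩

end Helpers

/-- If a monomial ideal `I` has linear quotients, then the
squarefree part of `I` also has linear quotients. -/
theorem sqfPart_hasLinearQuotients {K : Type*} [Field K] {n : ℕ}
    (I : Ideal (MvPolynomial (Fin n) K))
    (hmon : IsMonomialIdeal K I) (hlq : HasLinearQuotients K I) :
    HasLinearQuotients K (sqfPart K I) := by
  classical
  obtain ⟨L, hnd, hmem, hcol⟩ := hlq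
  refine ⟨L.filter (fun u => decide (Squarefree u)), hnd.filter _, ?_, ?_⟩
  · intro u
    rw [aux_minGens, List.mem_filter, hmem]
    simp
  intro i hi
  have hsplit := List.take_append_drop (i : ℕ) (L.filter (fun u => decide (Squarefree u)))
  rw [List.drop_eq_getElem_cons i.2, eq_comm, List.filter_eq_append_iff] at hsplit
  obtain ⟨l1, l2, hL, hl1, hl2⟩ := hsplit
  rw [List.filter_eq_cons_iff] at hl2
  obtain ⟨l3, l4, rfl, hl3, hsq, -⟩ := hl2
  rw [List.get_eq_getElem]
  generalize (L.filter (fun u => decide (Squarefree u)))[(i : ℕ)] = u at *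
  have hsq' : Squarefree u := by simpa using hsq
  have htake : (L.filter (fun u => decide (Squarefree u))).take (i : ℕ) =
      (l1 ++ l3).filter (fun u => decide (Squarefree u)) := by
    rw [List.filter_append, hl1, List.filter_eq_nil_iff.2 hl3, List.append_nil]
  rw [htake]
  rw [← List.append_assoc] at hL
  generalize l1 ++ l3 = l at *
  have hmonL : ∀ v ∈ L, IsMonomial K v := fun v hv => ((hmem v).1 hv).1
  have hmonl : ∀ v ∈ {v | v ∈ l}, IsMonomial K v := fun v hv => hmonL v (by
    rw [hL]; exact List.mem_append_left _ hv)
  obtain ⟨d, rfl⟩ := hmonL u (by simp [hL])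
  refine aux_backward (fun v hv => hmonl v (List.mem_filter.1 hv).1) ?_
  intro v hv
  obtain ⟨hvl, hvs⟩ := List.mem_filter.1 hv
  have hvs' : Squarefree (monomial v (1 : K)) := by simpa using hvs
  have hlen : l.length < L.length := by simp [hL]
  obtain ⟨A, hA⟩ := hcol ⟨l.length, hlen⟩ (List.length_pos_of_mem hvl)
  have e1 : L.take l.length = l := by simp [hL]
  have e2 : L.get ⟨l.length, hlen⟩ = monomial d (1 : K) := by simp [hL]
  simp only [e1, e2] at hA
  obtain ⟨k, w, hk, hw, hle⟩ := aux_forward hmonl hA hvl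
  refine ⟨k, w, hk, List.mem_filter.2 ⟨hw, ?_⟩, hle⟩
  have hvk := aux_sqf_le hvs' k
  have hdvd : monomial w (1 : K) ∣ X k * monomial d (1 : K) := by
    rw [X, monomial_mul, mul_one, monomial_one_dvd_monomial_one]
    exact hle
  have hX : Irreducible (X k : MvPolynomial (Fin n) K) := (X_prime).irreducible
  have hsqm : Squarefree (X k * monomial d (1 : K)) := by
    rw [squarefree_mul_iff]
    refine ⟨hX.isRelPrime_iff_not_dvd.2 ?_, hX.squarefree, hsq'⟩
    rw [X_dvd_monomial]
    simp
    omega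
  simpa using hsqm.squarefree_of_dvd hdvd
end
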